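/- arXiv:2602.23838 — 5 statements merged into one kernel-verified Lean document; each statement's English description precedes it below -/
import Mathlib

section
/- Assume the explicit abc conjecture: for all pairwise coprime positive integers a, b, c with a + b = c one has c < rad(a·b·c)^{7/4}. Fix integers t ≥ 3, an index i with 2 ≤ i ≤ t, and a positive integer c₀. Then there are only finitely many tuples (a₁,…,a_t, n₁, n₂) of positive integers satisfying: a₁ ≥ a₂ ≥ ⋯ ≥ a_t ≥ 2, n₁ ≥ n₂ ≥ 2, ∏_{l=1}^{t} a_l! = n₁!·n₂!, |a_l − n_j| ≥ 2 for all 1 ≤ l ≤ t and j ∈ {1,2}, n₁ > a₁, n₂ > a_i, and n₂ − a_i ≤ c₀·(n₁ − a₁). -/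
/-- The radical of a natural number: the product of its distinct prime factors. -/
def rad (n : ℕ) : ℕ := n.primeFactors.prod id

/-- The explicit abc conjecture (Baker / Laishram–Shorey form): for pairwise coprime
positive integers `a`, `b`, `c` with `a + b = c` one has `c < rad (a*b*c) ^ (7/4)`. -/
def ExplicitABC : Prop :=
  ∀ a b c : ℕ, 0 < a → 0 < b → 0 < c →
    Nat.Coprime a b → Nat.Coprime a c → Nat.Coprime b c → a + b = c →
    (c : ℝ) < (rad (a * b * c) : ℝ) ^ ((7 : ℝ) / 4)

/-!
Let `k₁ = n₁ - a₁` and let `b` be the largest of the `a_l` other than `a₁` and `a_i`. Cancelling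
`a₁!` and `a_i!` leaves `∏ a_l! = (a₁ + 1) ⋯ n₁ * (a_i + 1) ⋯ n₂` over the other `l`. So the `k₁`
consecutive integers ending at `n₁` are `b`-smooth, none of them is prime, and
`b! ≤ n₁ ^ ((1 + c₀) * k₁)`.

* If `n₁` exceeds a suitable power of `k₁`, multiply the abc inequality over disjoint pairs of
  neighbours in the block. Few multiples of each prime `p ≤ b` fit into the block, so the radicals
  are small, which forces `b ≫ k₁ * log n₁`. Then `b!` is too large.
* Otherwise the size of `b!` gives `b = O(k₁)`, so `n₁.choose k₁` has only `O(k₁ / log k₁)` prime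
  factors, each contributing at most `n₁`. This forces `n₁ = O(k₁)`, and a block that long
  contains a prime.

Primes in `((1 - ε) * n, n]` exist because `∑ (Λ n - 1) / n ^ s` extends continuously to the line
`re s = 1`: smoothing it with the Fejér kernel, the Riemann–Lebesgue lemma shows that `Λ` has
average `1` on the logarithmic scale.
-/

open Filter Topology MeasureTheory

section FejerKernel

/-- The Fejér kernel, the Fourier transform of the triangle `t ↦ 1 - |t| / l` on `[-l, l]`;
see `integral_triangle_mul_cexp`. -/
noncomputable def fejerKernel (l u : ℝ) : ℝ := l * Real.sinc (l * u / 2) ^ 2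

lemma fejerKernel_nonneg {l : ℝ} (hl : 0 ≤ l) (u : ℝ) : 0 ≤ fejerKernel l u :=
  mul_nonneg hl (sq_nonneg _)

lemma fejerKernel_le {l : ℝ} (hl : 0 ≤ l) (u : ℝ) : fejerKernel l u ≤ l :=
  mul_le_of_le_one_right hl ((sq_le_one_iff_abs_le_one _).mpr (Real.abs_sinc_le_one _))

lemma fejerKernel_mul_sq {l : ℝ} (hl : l ≠ 0) (u : ℝ) :
    fejerKernel l u * u ^ 2 = 4 / l * Real.sin (l * u / 2) ^ 2 := by
  rcases eq_or_ne u 0 with rfl | hu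
  · simp
  · rw [fejerKernel, Real.sinc_of_ne_zero (by positivity)]
    field_simp
    ring

lemma fejerKernel_mul_sq_le {l : ℝ} (hl : 0 < l) (u : ℝ) : fejerKernel l u * u ^ 2 ≤ 4 / l := by
  rw [fejerKernel_mul_sq hl.ne']
  exact mul_le_of_le_one_right (by positivity) (Real.sin_sq_le_one _)

lemma fejerKernel_le_mul_inv_one_add_sq {l : ℝ} (hl : 0 < l) (u : ℝ) :
    fejerKernel l u ≤ (l + 4 / l) * (1 + u ^ 2)⁻¹ := by
  rw [← div_eq_mul_inv, le_div_iff₀ (by positivity), mul_one_add]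
  exact add_le_add (fejerKernel_le hl.le u) (fejerKernel_mul_sq_le hl u)

lemma fejerKernel_le_mul_inv_one_add_sq_of_le_abs {l ε u : ℝ} (hl : 0 < l) (hε : 0 < ε)
    (hu : ε ≤ |u|) : fejerKernel l u ≤ 4 / l * (1 + (ε ^ 2)⁻¹) * (1 + u ^ 2)⁻¹ := by
  have hεu : 1 ≤ (ε ^ 2)⁻¹ * u ^ 2 := by
    rw [inv_mul_eq_div, one_le_div (by positivity), ← sq_abs u]
    gcongr
  rw [← div_eq_mul_inv, le_div_iff₀ (by positivity)]
  calc fejerKernel l u * (1 + u ^ 2)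
      ≤ fejerKernel l u * ((ε ^ 2)⁻¹ * u ^ 2 + u ^ 2) := by
        have := fejerKernel_nonneg hl.le u
        gcongr
    _ = fejerKernel l u * u ^ 2 * (1 + (ε ^ 2)⁻¹) := by ring
    _ ≤ 4 / l * (1 + (ε ^ 2)⁻¹) := by
        gcongr
        exact fejerKernel_mul_sq_le hl u

lemma half_le_fejerKernel {l u : ℝ} (hl : 0 < l) (hu : |l * u| ≤ 1) : l / 2 ≤ fejerKernel l u := by
  rcases eq_or_ne u 0 with rfl | hu0
  · simp [fejerKernel, hl.le]
  · refine le_of_mul_le_mul_right ?_ (by positivity : 0 < u ^ 2)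
    have hcos := (abs_le.mp (Real.cos_bound hu)).2
    have hpow : |l * u| ^ 4 ≤ |l * u| ^ 2 := pow_le_pow_of_le_one (abs_nonneg _) hu (by norm_num)
    rw [sq_abs] at hpow
    rw [fejerKernel_mul_sq hl.ne', Real.sin_sq_eq_half_sub, mul_div_cancel₀ _ two_ne_zero,
      div_mul_eq_mul_div, div_mul_eq_mul_div, div_le_div_iff₀ two_pos hl]
    nlinarith [sq_nonneg (l * u)]

lemma tendsto_fejerKernel_atTop {l : ℝ} (hl : 0 < l) : Tendsto (fejerKernel l) atTop (𝓝 0) := by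
  have hdecay : Tendsto (fun u : ℝ => (l + 4 / l) * (1 + u ^ 2)⁻¹) atTop (𝓝 0) := by
    rw [← mul_zero (l + 4 / l)]
    exact (tendsto_inv_atTop_zero.comp (tendsto_atTop_add_const_left _ _
      (tendsto_pow_atTop two_ne_zero))).const_mul _
  exact squeeze_zero (fejerKernel_nonneg hl.le) (fejerKernel_le_mul_inv_one_add_sq hl) hdecay

lemma integral_triangle_mul_cos {l : ℝ} (hl : 0 < l) (u : ℝ) :
    ∫ t in (0 : ℝ)..l, (1 - t / l) * Real.cos (t * u) = fejerKernel l u / 2 := by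
  rcases eq_or_ne u 0 with rfl | hu
  · have hderiv (t : ℝ) : HasDerivAt (fun t => t - t ^ 2 / (2 * l)) (1 - t / l) t := by
      refine ((hasDerivAt_id t).sub (((hasDerivAt_id t).pow 2).div_const (2 * l))).congr_deriv ?_
      simp only [Nat.cast_ofNat, id_eq, Nat.add_one_sub_one, pow_one, mul_one, sub_right_inj]
      field_simp
    simp only [mul_zero, Real.cos_zero, mul_one]
    rw [intervalIntegral.integral_eq_sub_of_hasDerivAt (fun t _ => hderiv t)
      (Continuous.intervalIntegrable (by fun_prop) _ _)]
    simp only [fejerKernel, ne_eq, OfNat.ofNat_ne_zero, not_false_eq_true, zero_pow, zero_div,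
      sub_self, sub_zero, mul_zero, Real.sinc_zero, one_pow, mul_one]
    field_simp
    ring
  · have hderiv (t : ℝ) : HasDerivAt
        (fun t => (1 - t / l) * (Real.sin (t * u) / u) - Real.cos (t * u) / (l * u ^ 2))
        ((1 - t / l) * Real.cos (t * u)) t := by
      have hlin : HasDerivAt (fun t : ℝ => t * u) u t := by
        simpa using (hasDerivAt_id t).mul_const u
      refine (((((hasDerivAt_id t).div_const l).const_sub 1).mul (hlin.sin.div_const u)).sub
        (hlin.cos.div_const (l * u ^ 2))).congr_deriv ?_
      simp only [one_div, neg_mul, id_eq]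
      field_simp
      ring
    rw [intervalIntegral.integral_eq_sub_of_hasDerivAt (fun t _ => hderiv t)
      (Continuous.intervalIntegrable (by fun_prop) _ _),
      eq_div_of_mul_eq (by positivity) (fejerKernel_mul_sq hl.ne' u), Real.sin_sq_eq_half_sub,
      mul_div_cancel₀ _ two_ne_zero]
    simp only [zero_div, sub_zero, zero_mul, Real.sin_zero, mul_zero, Real.cos_zero, one_div,
      mul_inv_rev, zero_sub, sub_neg_eq_add]
    field_simp
    ring

lemma integral_triangle_mul_cexp {l : ℝ} (hl : 0 < l) (u : ℝ) :
    ∫ t in (-l)..l, ((1 - |t| / l : ℝ) : ℂ) * Complex.exp (t * u * Complex.I) =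
      fejerKernel l u := by
  set g : ℝ → ℂ := fun t => ((1 - |t| / l : ℝ) : ℂ) * Complex.exp (t * u * Complex.I) with hg
  have hcont : Continuous g := by fun_prop
  have hcont_neg : Continuous fun t => g (-t) := by fun_prop
  have hfold (t : ℝ) (ht : t ∈ Set.uIcc 0 l) :
      g (-t) + g t = ((2 * ((1 - t / l) * Real.cos (t * u)) : ℝ) : ℂ) := by
    rw [Set.uIcc_of_le hl.le] at ht
    simp only [hg, abs_neg, abs_of_nonneg ht.1]
    push_cast
    rw [Complex.cos]
    ring_nf
  have hneg : ∫ t in (-l)..0, g t = ∫ t in (0 : ℝ)..l, g (-t) := by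
    rw [intervalIntegral.integral_comp_neg, neg_zero]
  rw [← intervalIntegral.integral_add_adjacent_intervals (b := 0)
    (hcont.intervalIntegrable _ _) (hcont.intervalIntegrable _ _), hneg,
    ← intervalIntegral.integral_add (hcont_neg.intervalIntegrable _ _)
    (hcont.intervalIntegrable _ _), intervalIntegral.integral_congr hfold,
    intervalIntegral.integral_ofReal, intervalIntegral.integral_const_mul,
    integral_triangle_mul_cos hl, mul_div_cancel₀ _ two_ne_zero]

end FejerKernel

section Smoothing

lemma summable_inv_one_add_int_sq : Summable fun m : ℤ => (1 + (m : ℝ) ^ 2)⁻¹ := by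
  refine (Real.summable_one_div_int_pow.mpr one_lt_two).of_norm_bounded_eventually ?_
  filter_upwards [(Set.finite_singleton (0 : ℤ)).compl_mem_cofinite] with m hm
  have hm0 : (m : ℝ) ≠ 0 := Int.cast_ne_zero.mpr hm
  rw [Real.norm_of_nonneg (by positivity), one_div]
  gcongr
  linarith

variable {g : ℕ → ℝ} {A : ℝ}

-- On a unit interval of `log n` the weight `1 / n` is constant up to a factor `exp 1`.
lemma sum_div_le_of_log_mem_Icc (hg : ∀ n, 0 ≤ g n)
    (hA : ∀ N : ℕ, ∑ n ∈ Finset.Icc 1 N, g n ≤ A * N) {z : ℝ} {s : Finset ℕ}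
    (hs : ∀ n ∈ s, Real.log n ∈ Set.Icc (z - 1) z) :
    ∑ n ∈ s, g n / n ≤ A * Real.exp 1 := by
  have hA0 : 0 ≤ A := by simpa using (hg 1).trans (by simpa using hA 1)
  have hpos {n : ℕ} (hn : n ∈ s.erase 0) : (0 : ℝ) < n :=
    Nat.cast_pos.mpr (Nat.pos_of_ne_zero (Finset.ne_of_mem_erase hn))
  have hterm (n : ℕ) (hn : n ∈ s.erase 0) : g n / n ≤ g n * Real.exp (1 - z) := by
    rw [div_eq_mul_inv]
    refine mul_le_mul_of_nonneg_left ?_ (hg n)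
    rw [← neg_sub, Real.exp_neg]
    exact inv_anti₀ (Real.exp_pos _)
      ((Real.le_log_iff_exp_le (hpos hn)).mp (hs n (Finset.mem_of_mem_erase hn)).1)
  have hsub : s.erase 0 ⊆ Finset.Icc 1 ⌊Real.exp z⌋₊ := fun n hn =>
    Finset.mem_Icc.mpr ⟨Nat.pos_of_ne_zero (Finset.ne_of_mem_erase hn),
      Nat.le_floor ((Real.log_le_iff_le_exp (hpos hn)).mp (hs n (Finset.mem_of_mem_erase hn)).2)⟩
  calc ∑ n ∈ s, g n / n
      = ∑ n ∈ s.erase 0, g n / n := (Finset.sum_erase _ (by simp)).symm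
    _ ≤ ∑ n ∈ s.erase 0, g n * Real.exp (1 - z) := Finset.sum_le_sum hterm
    _ = (∑ n ∈ s.erase 0, g n) * Real.exp (1 - z) := (Finset.sum_mul _ _ _).symm
    _ ≤ A * Real.exp z * Real.exp (1 - z) := by
        gcongr
        calc ∑ n ∈ s.erase 0, g n
            ≤ ∑ n ∈ Finset.Icc 1 ⌊Real.exp z⌋₊, g n :=
              Finset.sum_le_sum_of_subset_of_nonneg hsub fun n _ _ => hg n
          _ ≤ A * ⌊Real.exp z⌋₊ := hA _
          _ ≤ A * Real.exp z := by gcongr; exact Nat.floor_le (Real.exp_pos z).le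
    _ = A * Real.exp 1 := by rw [mul_assoc, ← Real.exp_add, add_sub_cancel]

lemma inv_one_add_sq_le_floor (u : ℝ) :
    (1 + u ^ 2)⁻¹ ≤ 3 * (1 + (⌊u⌋ : ℝ) ^ 2)⁻¹ := by
  rw [← div_eq_mul_inv, inv_le_comm₀ (by positivity) (by positivity), inv_div,
    div_le_iff₀ three_pos]
  have hfract : (u - ⌊u⌋) ^ 2 ≤ 1 :=
    pow_le_one₀ (Int.fract_nonneg u) (Int.fract_lt_one u).le
  nlinarith [sq_nonneg (u + (u - ⌊u⌋))]

lemma exists_sum_div_mul_inv_one_add_sq_le (hg : ∀ n, 0 ≤ g n)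
    (hA : ∀ N : ℕ, ∑ n ∈ Finset.Icc 1 N, g n ≤ A * N) :
    ∃ C, ∀ (y : ℝ) (s : Finset ℕ),
      ∑ n ∈ s, g n / n * (1 + (y - Real.log n) ^ 2)⁻¹ ≤ C := by
  have hA0 : 0 ≤ A := by simpa using (hg 1).trans (by simpa using hA 1)
  refine ⟨A * Real.exp 1 * ∑' m : ℤ, 3 * (1 + (m : ℝ) ^ 2)⁻¹, fun y s => ?_⟩
  set block : ℕ → ℤ := fun n => ⌊y - Real.log n⌋
  have hfiber (m : ℤ) : ∑ n ∈ s with block n = m, g n / n ≤ A * Real.exp 1 := by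
    refine sum_div_le_of_log_mem_Icc hg hA (z := y - m) fun n hn => ?_
    obtain ⟨hm, hm'⟩ := Int.floor_eq_iff.mp (Finset.mem_filter.mp hn).2
    constructor <;> linarith
  calc ∑ n ∈ s, g n / n * (1 + (y - Real.log n) ^ 2)⁻¹
      ≤ ∑ n ∈ s, g n / n * (3 * (1 + (block n : ℝ) ^ 2)⁻¹) := by
        gcongr with n
        · exact div_nonneg (hg n) n.cast_nonneg
        · exact inv_one_add_sq_le_floor _
    _ = ∑ m ∈ s.image block, ∑ n ∈ s with block n = m, g n / n * (3 * (1 + (m : ℝ) ^ 2)⁻¹) := by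
        rw [← Finset.sum_fiberwise_of_maps_to fun n => Finset.mem_image_of_mem block]
        refine Finset.sum_congr rfl fun m _ => Finset.sum_congr rfl fun n hn => ?_
        rw [(Finset.mem_filter.mp hn).2]
    _ ≤ ∑ m ∈ s.image block, A * Real.exp 1 * (3 * (1 + (m : ℝ) ^ 2)⁻¹) := by
        simp only [← Finset.sum_mul]
        gcongr with m
        exact hfiber m
    _ ≤ A * Real.exp 1 * ∑' m : ℤ, 3 * (1 + (m : ℝ) ^ 2)⁻¹ := by
        rw [← Finset.mul_sum]
        gcongr
        exact (summable_inv_one_add_int_sq.mul_left 3).sum_le_tsum _ fun m _ => by positivity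

lemma summable_div_mul_inv_one_add_sq (hg : ∀ n, 0 ≤ g n)
    (hA : ∀ N : ℕ, ∑ n ∈ Finset.Icc 1 N, g n ≤ A * N) (y : ℝ) :
    Summable fun n : ℕ => g n / n * (1 + (y - Real.log n) ^ 2)⁻¹ := by
  obtain ⟨C, hC⟩ := exists_sum_div_mul_inv_one_add_sq_le hg hA
  exact summable_of_sum_le (fun n => mul_nonneg (div_nonneg (hg n) n.cast_nonneg) (by positivity))
    (hC y)

lemma summable_div_mul_fejerKernel (hg : ∀ n, 0 ≤ g n)
    (hA : ∀ N : ℕ, ∑ n ∈ Finset.Icc 1 N, g n ≤ A * N) {l : ℝ} (hl : 0 < l) (y : ℝ) :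
    Summable fun n : ℕ => g n / n * fejerKernel l (y - Real.log n) := by
  refine .of_nonneg_of_le (fun n => ?_) (fun n => ?_)
    ((summable_div_mul_inv_one_add_sq hg hA y).mul_left (l + 4 / l))
  · exact mul_nonneg (div_nonneg (hg n) n.cast_nonneg) (fejerKernel_nonneg hl.le _)
  · rw [mul_left_comm]
    exact mul_le_mul_of_nonneg_left (fejerKernel_le_mul_inv_one_add_sq hl _)
      (div_nonneg (hg n) n.cast_nonneg)

variable {f : ℕ → ℂ} {G : ℂ → ℂ} {l : ℝ}

lemma term_add_mul_I (f : ℕ → ℂ) (s : ℂ) (t : ℝ) (n : ℕ) :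
    LSeries.term f (s + t * Complex.I) n =
      LSeries.term f s n * Complex.exp (-(t * Real.log n * Complex.I)) := by
  rcases eq_or_ne n 0 with rfl | hn
  · simp
  · have hn' : (n : ℂ) ≠ 0 := Nat.cast_ne_zero.mpr hn
    rw [LSeries.term_of_ne_zero hn, LSeries.term_of_ne_zero hn, Complex.cpow_add _ _ hn',
      div_mul_eq_div_div, div_eq_mul_inv (_ / _), ← Complex.cpow_neg,
      Complex.cpow_def_of_ne_zero hn' (-(t * Complex.I)), Complex.natCast_log]
    ring_nf

lemma hasSum_term_mul_fejerKernel {σ : ℝ} (hf : LSeriesSummable f σ) (hl : 0 < l) (y : ℝ) :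
    HasSum (fun n : ℕ => LSeries.term f σ n * fejerKernel l (y - Real.log n))
      (∫ t in (-l)..l, ((1 - |t| / l : ℝ) : ℂ) *
        (LSeries f (σ + t * Complex.I) * Complex.exp (t * y * Complex.I))) := by
  set F : ℕ → ℝ → ℂ := fun n t => ((1 - |t| / l : ℝ) : ℂ) *
    (LSeries.term f (σ + t * Complex.I) n * Complex.exp (t * y * Complex.I)) with hF
  have hF_eq (n : ℕ) (t : ℝ) : F n t = LSeries.term f σ n * (((1 - |t| / l : ℝ) : ℂ) *
      Complex.exp (t * (y - Real.log n : ℝ) * Complex.I)) := by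
    simp only [hF]
    rw [term_add_mul_I, mul_assoc, ← Complex.exp_add, mul_left_comm]
    push_cast
    ring_nf
  have hF_integral (n : ℕ) :
      ∫ t in (-l)..l, F n t = LSeries.term f σ n * fejerKernel l (y - Real.log n) := by
    simp only [hF_eq, intervalIntegral.integral_const_mul, integral_triangle_mul_cexp hl]
  have hF_norm (n : ℕ) (t : ℝ) (ht : t ∈ Set.uIoc (-l) l) : ‖F n t‖ ≤ ‖LSeries.term f σ n‖ := by
    rw [Set.uIoc_of_le (by linarith)] at ht
    have htl : |t| / l ≤ 1 := (div_le_one hl).mpr (abs_le.mpr ⟨ht.1.le, ht.2⟩)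
    have htl' : 0 ≤ |t| / l := by positivity
    rw [hF_eq, norm_mul, norm_mul, ← Complex.ofReal_mul, Complex.norm_exp_ofReal_mul_I, mul_one,
      Complex.norm_real, Real.norm_of_nonneg (by linarith)]
    exact mul_le_of_le_one_right (norm_nonneg _) (by linarith)
  have hsum (t : ℝ) : HasSum (fun n => LSeries.term f (σ + t * Complex.I) n)
      (LSeries f (σ + t * Complex.I)) :=
    LSeriesSummable.LSeriesHasSum <| (LSeriesSummable_iff_of_re_eq_re (by simp)).mpr hf
  simp only [← hF_integral]
  refine intervalIntegral.hasSum_integral_of_dominated_convergence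
    (fun n _ => ‖LSeries.term f σ n‖) (fun n => Continuous.aestronglyMeasurable ?_)
    (fun n => ae_of_all _ (hF_norm n)) (ae_of_all _ fun t _ => hf.norm)
    intervalIntegrable_const (ae_of_all _ fun t _ => ((hsum t).mul_right _).mul_left _)
  rw [funext (hF_eq n)]
  fun_prop

lemma tendsto_integral_triangle_mul_nhdsGT_one (hG : ContinuousOn G {s | 1 ≤ s.re}) (l y : ℝ) :
    Tendsto (fun σ : ℝ => ∫ t in (-l)..l, ((1 - |t| / l : ℝ) : ℂ) *
        (G (σ + t * Complex.I) * Complex.exp (t * y * Complex.I))) (𝓝[>] 1)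
      (𝓝 (∫ t in (-l)..l, ((1 - |t| / l : ℝ) : ℂ) *
        (G (1 + t * Complex.I) * Complex.exp (t * y * Complex.I)))) := by
  have hGmax : Continuous fun q : ℝ × ℝ => G ((max q.1 1 : ℝ) + q.2 * Complex.I) :=
    hG.comp_continuous (by fun_prop) fun q => by simp
  have hcont := intervalIntegral.continuous_parametric_intervalIntegral_of_continuous'
    (μ := volume) (f := fun σ t : ℝ => ((1 - |t| / l : ℝ) : ℂ) *
      (G ((max σ 1 : ℝ) + t * Complex.I) * Complex.exp (t * y * Complex.I)))
    (by
      simp only [Function.uncurry_def]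
      exact Continuous.mul (by fun_prop) (hGmax.mul (by fun_prop))) (-l) l
  have hlim := hcont.tendsto 1
  simp only [max_self, Complex.ofReal_one] at hlim
  refine (hlim.mono_left nhdsWithin_le_nhds).congr' ?_
  filter_upwards [self_mem_nhdsWithin] with σ hσ
  rw [max_eq_left (le_of_lt hσ)]

lemma norm_term_le_norm_div {s : ℂ} (hs : 1 ≤ s.re) (n : ℕ) :
    ‖LSeries.term f s n‖ ≤ ‖f n‖ / n := by
  rcases eq_or_ne n 0 with rfl | hn
  · simp
  · have hn1 : (1 : ℝ) ≤ n := Nat.one_le_cast.mpr (Nat.pos_of_ne_zero hn)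
    rw [LSeries.norm_term_eq, if_neg hn]
    gcongr
    exact Real.self_le_rpow_of_one_le hn1 hs

lemma tendsto_term_nhdsGT_one (f : ℕ → ℂ) (n : ℕ) :
    Tendsto (fun σ : ℝ => LSeries.term f σ n) (𝓝[>] 1) (𝓝 (f n / n)) := by
  rcases eq_or_ne n 0 with rfl | hn
  · simp
  · have hcont : Continuous fun σ : ℝ => f n / (n : ℂ) ^ (σ : ℂ) :=
      continuous_const.div (Continuous.const_cpow (by fun_prop) (.inl (Nat.cast_ne_zero.mpr hn)))
        fun σ => Complex.cpow_ne_zero_iff.mpr (.inl (Nat.cast_ne_zero.mpr hn))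
    simp only [LSeries.term_of_ne_zero hn]
    simpa using (hcont.tendsto 1).mono_left nhdsWithin_le_nhds

lemma tsum_div_mul_fejerKernel_eq_integral
    (hA : ∀ N : ℕ, ∑ n ∈ Finset.Icc 1 N, ‖f n‖ ≤ A * N) (hG : ContinuousOn G {s | 1 ≤ s.re})
    (hfG : ∀ s : ℂ, 1 < s.re → LSeries f s = G s) (hl : 0 < l) (y : ℝ) :
    ∑' n : ℕ, f n / n * fejerKernel l (y - Real.log n) =
      ∫ t in (-l)..l, ((1 - |t| / l : ℝ) : ℂ) *
        (G (1 + t * Complex.I) * Complex.exp (t * y * Complex.I)) := by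
  have hsmooth {σ : ℝ} (hσ : 1 < σ) : ∑' n : ℕ, LSeries.term f σ n *
      fejerKernel l (y - Real.log n) = ∫ t in (-l)..l, ((1 - |t| / l : ℝ) : ℂ) *
        (G (σ + t * Complex.I) * Complex.exp (t * y * Complex.I)) := by
    have hO : (fun N : ℕ => ∑ n ∈ Finset.Icc 1 N, ‖f n‖) =O[atTop] fun N => (N : ℝ) ^ (1 : ℝ) :=
      .of_bound A <| .of_forall fun N => by
        rw [Real.rpow_one, Real.norm_of_nonneg (by positivity), Real.norm_natCast]
        exact hA N
    have hf : LSeriesSummable f σ :=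
      LSeriesSummable_of_sum_norm_bigO hO zero_le_one (by simpa using hσ)
    simp only [(hasSum_term_mul_fejerKernel hf hl y).tsum_eq]
    refine intervalIntegral.integral_congr fun t _ => ?_
    simp only [hfG (σ + t * Complex.I) (by simpa using hσ)]
  refine tendsto_nhds_unique ?_ (tendsto_integral_triangle_mul_nhdsGT_one hG l y)
  refine Tendsto.congr' (by filter_upwards [self_mem_nhdsWithin] with σ hσ using hsmooth hσ) ?_
  refine tendsto_tsum_of_dominated_convergence
    (summable_div_mul_fejerKernel (fun n => norm_nonneg (f n)) hA hl y)
    (fun n => (tendsto_term_nhdsGT_one f n).mul_const _) ?_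
  filter_upwards [self_mem_nhdsWithin] with σ hσ n
  have hK := fejerKernel_nonneg hl.le (y - Real.log n)
  rw [norm_mul, Complex.norm_real, Real.norm_of_nonneg hK]
  gcongr
  exact norm_term_le_norm_div (by simpa using le_of_lt hσ) n

lemma tendsto_integral_mul_cexp_atTop (g : ℝ → ℂ) {a b : ℝ} (hab : a ≤ b) :
    Tendsto (fun y : ℝ => ∫ t in a..b, g t * Complex.exp (t * y * Complex.I)) atTop (𝓝 0) := by
  have hscale : Tendsto (fun y : ℝ => -y / (2 * Real.pi)) atTop (cocompact ℝ) :=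
    (tendsto_neg_atTop_atBot.atBot_div_const Real.two_pi_pos).mono_right atBot_le_cocompact
  refine ((Real.tendsto_integral_exp_smul_cocompact ((Set.Ioc a b).indicator g)).comp
    hscale).congr fun y => ?_
  rw [Function.comp_apply, intervalIntegral.integral_of_le hab,
    ← integral_indicator measurableSet_Ioc]
  congr 1 with t
  by_cases ht : t ∈ Set.Ioc a b
  swap
  · simp [ht]
  rw [Set.indicator_of_mem ht, Set.indicator_of_mem ht, Circle.smul_def, Real.fourierChar_apply,
    smul_eq_mul, mul_comm]
  congr 3
  push_cast
  field_simp

/-- The Tauberian step of the Wiener–Ikehara theorem, with the coefficients smoothed on the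
logarithmic scale. -/
theorem tendsto_tsum_div_mul_fejerKernel
    (hA : ∀ N : ℕ, ∑ n ∈ Finset.Icc 1 N, ‖f n‖ ≤ A * N) (hG : ContinuousOn G {s | 1 ≤ s.re})
    (hfG : ∀ s : ℂ, 1 < s.re → LSeries f s = G s) (hl : 0 < l) :
    Tendsto (fun y : ℝ => ∑' n : ℕ, f n / n * fejerKernel l (y - Real.log n)) atTop (𝓝 0) := by
  simp only [tsum_div_mul_fejerKernel_eq_integral hA hG hfG hl, ← mul_assoc]
  exact tendsto_integral_mul_cexp_atTop _ (by linarith)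

end Smoothing

section PrimesInShortIntervals

open ArithmeticFunction hiding log
open DirichletCharacter

lemma dslope_LFunctionTrivChar₁_one {s : ℂ} (hs : s ≠ 1) :
    dslope (LFunctionTrivChar₁ 1) 1 s = riemannZeta s - (s - 1)⁻¹ := by
  have hs' : s - 1 ≠ 0 := sub_ne_zero.mpr hs
  rw [dslope_of_ne _ hs, slope_def_field]
  simp only [LFunctionTrivChar₁, LFunctionTrivChar, LFunction_modOne_eq, Nat.primeFactors_one,
    Finset.prod_empty, Function.update_of_ne hs, Function.update_self]
  field_simp

lemma vonMangoldt_residueClass_one (n : ℕ) : vonMangoldt.residueClass (1 : ZMod 1) n = Λ n :=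
  Set.indicator_of_mem (s := {n : ℕ | (n : ZMod 1) = 1}) (Subsingleton.elim _ _) _

lemma exists_continuousOn_eq_LSeries_vonMangoldt_sub_one :
    ∃ G : ℂ → ℂ, ContinuousOn G {s | 1 ≤ s.re} ∧
      ∀ s : ℂ, 1 < s.re → LSeries (fun n => ((Λ n - 1 : ℝ) : ℂ)) s = G s := by
  refine ⟨fun s => vonMangoldt.LFunctionResidueClassAux (1 : ZMod 1) s -
    dslope (LFunctionTrivChar₁ 1) 1 s, ?_, fun s hs => ?_⟩
  · refine (vonMangoldt.continuousOn_LFunctionResidueClassAux 1).sub ?_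
    refine Continuous.continuousOn (continuousOn_univ.mp ?_)
    exact (continuousOn_dslope univ_mem).mpr
      ⟨(differentiable_LFunctionTrivChar₁ 1).continuous.continuousOn,
        differentiable_LFunctionTrivChar₁ 1 1⟩
  · have hs1 : s ≠ 1 := fun h => by simp [h] at hs
    have hΛ := vonMangoldt.eqOn_LFunctionResidueClassAux isUnit_one (q := 1) hs
    simp only [vonMangoldt_residueClass_one, Nat.totient_one, Nat.cast_one, inv_one,
      one_div] at hΛ
    have hsub := LSeries_sub (LSeriesSummable_vonMangoldt hs) (LSeriesSummable_one_iff.mpr hs)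
    rw [LSeries_one_eq_riemannZeta hs] at hsub
    beta_reduce
    rw [hΛ, dslope_LFunctionTrivChar₁_one hs1, sub_sub_sub_cancel_right, ← hsub]
    congr 1 with n
    simp

lemma sum_Icc_vonMangoldt_le (N : ℕ) : ∑ n ∈ Finset.Icc 1 N, Λ n ≤ (Real.log 4 + 4) * N := by
  simpa [Chebyshev.psi] using! Chebyshev.psi_le_const_mul_self N.cast_nonneg

lemma sum_Icc_norm_vonMangoldt_sub_one_le (N : ℕ) :
    ∑ n ∈ Finset.Icc 1 N, ‖((Λ n - 1 : ℝ) : ℂ)‖ ≤ (Real.log 4 + 5) * N := by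
  have hterm (n : ℕ) : ‖((Λ n - 1 : ℝ) : ℂ)‖ ≤ Λ n + 1 := by
    rw [Complex.norm_real]
    refine (norm_sub_le _ _).trans_eq ?_
    rw [Real.norm_of_nonneg vonMangoldt_nonneg, norm_one]
  calc ∑ n ∈ Finset.Icc 1 N, ‖((Λ n - 1 : ℝ) : ℂ)‖
      ≤ ∑ n ∈ Finset.Icc 1 N, (Λ n + 1) := Finset.sum_le_sum fun n _ => hterm n
    _ = ∑ n ∈ Finset.Icc 1 N, Λ n + N := by simp [Finset.sum_add_distrib]
    _ ≤ (Real.log 4 + 5) * N := by linarith [sum_Icc_vonMangoldt_le N]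

lemma sum_Icc_one_le (N : ℕ) : ∑ _n ∈ Finset.Icc 1 N, (1 : ℝ) ≤ 1 * N := by simp

variable {l : ℝ}

lemma tendsto_tsum_vonMangoldt_div_sub_tsum_one_div (hl : 0 < l) :
    Tendsto (fun y : ℝ => ∑' n : ℕ, Λ n / n * fejerKernel l (y - Real.log n) -
      ∑' n : ℕ, 1 / n * fejerKernel l (y - Real.log n)) atTop (𝓝 0) := by
  obtain ⟨G, hG, hΛG⟩ := exists_continuousOn_eq_LSeries_vonMangoldt_sub_one
  have hlim := (Complex.continuous_re.tendsto 0).comp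
    (tendsto_tsum_div_mul_fejerKernel sum_Icc_norm_vonMangoldt_sub_one_le hG hΛG hl)
  refine hlim.congr fun y => ?_
  rw [← (summable_div_mul_fejerKernel (fun _ => vonMangoldt_nonneg) sum_Icc_vonMangoldt_le
    hl y).tsum_sub (summable_div_mul_fejerKernel (fun _ => zero_le_one) sum_Icc_one_le hl y)]
  simp only [Function.comp_apply, ← Complex.ofReal_natCast, ← Complex.ofReal_div,
    ← Complex.ofReal_mul, ← Complex.ofReal_tsum, Complex.ofReal_re, sub_div, sub_mul]

lemma tendsto_tsum_mul_fejerKernel_of_summable {a : ℕ → ℝ} (ha : Summable fun n => ‖a n‖)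
    (hl : 0 < l) :
    Tendsto (fun y : ℝ => ∑' n : ℕ, a n * fejerKernel l (y - Real.log n)) atTop (𝓝 0) := by
  rw [← tsum_zero (α := ℝ) (β := ℕ)]
  refine tendsto_tsum_of_dominated_convergence (ha.mul_right l) (fun n => ?_)
    (.of_forall fun y n => ?_)
  · rw [← mul_zero (a n)]
    exact ((tendsto_fejerKernel_atTop hl).comp
      (tendsto_atTop_add_const_right _ _ tendsto_id)).const_mul _
  · rw [norm_mul, Real.norm_of_nonneg (fejerKernel_nonneg hl.le _)]
    gcongr
    exact fejerKernel_le hl.le _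

lemma summable_vonMangoldt_non_primes_div :
    Summable fun n : ℕ => (if n.Prime then 0 else Λ n) / n := by
  simpa only [vonMangoldt_residueClass_one] using
    vonMangoldt.summable_residueClass_non_primes_div (1 : ZMod 1)

lemma div_four_mul_exp_le_one_div_mul_fejerKernel {x y : ℝ} (hl : 1 ≤ l)
    (hyx : Real.exp y < x) (hxy : x ≤ Real.exp y * (1 + 1 / l)) :
    l / (4 * Real.exp y) ≤ 1 / x * fejerKernel l (y - Real.log x) := by
  have hl0 : 0 < l := zero_lt_one.trans_le hl
  have hx0 : 0 < x := (Real.exp_pos y).trans hyx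
  have hlog : y ≤ Real.log x := (Real.le_log_iff_exp_le hx0).mpr hyx.le
  have hlog' : Real.log x ≤ y + 1 / l := by
    refine (Real.log_le_iff_le_exp hx0).mpr (hxy.trans ?_)
    rw [Real.exp_add, add_comm 1]
    gcongr
    exact Real.add_one_le_exp _
  have hu : |l * (y - Real.log x)| ≤ 1 := by
    rw [abs_mul, abs_of_pos hl0, ← le_div_iff₀' hl0, abs_le]
    constructor <;> linarith [one_div_pos.mpr hl0]
  have hx2 : x ≤ 2 * Real.exp y := by
    have : 1 / l ≤ 1 := (div_le_one hl0).mpr hl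
    nlinarith [Real.exp_pos y]
  calc l / (4 * Real.exp y) = 1 / (2 * Real.exp y) * (l / 2) := by field_simp; norm_num
    _ ≤ 1 / x * fejerKernel l (y - Real.log x) := by
      gcongr
      exact half_le_fejerKernel hl0 hu

lemma quarter_sub_le_tsum_one_div_mul_fejerKernel (hl : 1 ≤ l) (y : ℝ) :
    1 / 4 - l / 4 * Real.exp (-y) ≤ ∑' n : ℕ, 1 / n * fejerKernel l (y - Real.log n) := by
  have hl0 : 0 < l := zero_lt_one.trans_le hl
  set X := Real.exp y with hX
  have hX0 : 0 < X := Real.exp_pos y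
  set W := Finset.Ioc ⌊X⌋₊ ⌊X * (1 + 1 / l)⌋₊ with hW
  have hW_card : X / l - 1 ≤ W.card := by
    have hle : ⌊X⌋₊ ≤ ⌊X * (1 + 1 / l)⌋₊ :=
      Nat.floor_le_floor (le_mul_of_one_le_right hX0.le (by simp [hl0.le]))
    rw [hW, Nat.card_Ioc, Nat.cast_sub hle]
    have hX_add : X * (1 + 1 / l) = X + X / l := by ring
    linarith [Nat.lt_floor_add_one (X * (1 + 1 / l)), Nat.floor_le hX0.le]
  have hterm (n : ℕ) (hn : n ∈ W) : l / (4 * X) ≤ 1 / n * fejerKernel l (y - Real.log n) := by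
    obtain ⟨hXn, hnX⟩ := Finset.mem_Ioc.mp hn
    exact div_four_mul_exp_le_one_div_mul_fejerKernel hl ((Nat.floor_lt hX0.le).mp hXn)
      ((Nat.le_floor_iff (by positivity)).mp hnX)
  calc 1 / 4 - l / 4 * Real.exp (-y) = (X / l - 1) * (l / (4 * X)) := by
        rw [Real.exp_neg, ← hX]
        field_simp
    _ ≤ W.card * (l / (4 * X)) := by gcongr
    _ ≤ ∑ n ∈ W, 1 / n * fejerKernel l (y - Real.log n) := by
        rw [← nsmul_eq_mul]
        exact Finset.card_nsmul_le_sum _ _ _ hterm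
    _ ≤ ∑' n : ℕ, 1 / n * fejerKernel l (y - Real.log n) :=
        (summable_div_mul_fejerKernel (fun _ => zero_le_one) sum_Icc_one_le hl0 y).sum_le_tsum _
          fun n _ => mul_nonneg (by positivity) (fejerKernel_nonneg hl0.le _)

lemma tsum_vonMangoldt_div_mul_fejerKernel_le {ε y C : ℝ} (hl : 0 < l) (hε : 0 < ε)
    (hC : ∀ s : Finset ℕ, ∑ n ∈ s, Λ n / n * (1 + (y - Real.log n) ^ 2)⁻¹ ≤ C)
    (hp : ∀ p : ℕ, p.Prime → ε ≤ |y - Real.log p|) :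
    ∑' n : ℕ, Λ n / n * fejerKernel l (y - Real.log n) ≤
      ∑' n : ℕ, (if n.Prime then 0 else Λ n) / n * fejerKernel l (y - Real.log n) +
        4 / l * (1 + (ε ^ 2)⁻¹) * C := by
  have hΛ (n : ℕ) : 0 ≤ Λ n / n := div_nonneg vonMangoldt_nonneg n.cast_nonneg
  have hNP (n : ℕ) : 0 ≤ (if n.Prime then 0 else Λ n) / n := by
    split_ifs
    · simp
    · exact hΛ n
  have hterm (n : ℕ) : Λ n / n * fejerKernel l (y - Real.log n) ≤
      (if n.Prime then 0 else Λ n) / n * fejerKernel l (y - Real.log n) +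
        4 / l * (1 + (ε ^ 2)⁻¹) * (Λ n / n * (1 + (y - Real.log n) ^ 2)⁻¹) := by
    have := fejerKernel_nonneg hl.le (y - Real.log n)
    split_ifs with hn
    · rw [zero_div, zero_mul, zero_add, mul_left_comm]
      gcongr
      exact fejerKernel_le_mul_inv_one_add_sq_of_le_abs hl hε (hp n hn)
    · exact le_add_of_nonneg_right (mul_nonneg (by positivity)
        (mul_nonneg (hΛ n) (by positivity)))
  refine Real.tsum_le_of_sum_le (fun n => mul_nonneg (hΛ n) (fejerKernel_nonneg hl.le _))
    fun s => (Finset.sum_le_sum fun n _ => hterm n).trans ?_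
  rw [Finset.sum_add_distrib, ← Finset.mul_sum]
  gcongr
  · refine Summable.sum_le_tsum s
      (fun n _ => mul_nonneg (hNP n) (fejerKernel_nonneg hl.le _)) ?_
    exact (summable_vonMangoldt_non_primes_div.mul_right l).of_nonneg_of_le
      (fun n => mul_nonneg (hNP n) (fejerKernel_nonneg hl.le _))
      fun n => mul_le_mul_of_nonneg_left (fejerKernel_le hl.le _) (hNP n)
  · exact hC s

theorem eventually_exists_prime_abs_sub_log_lt {ε : ℝ} (hε : 0 < ε) :
    ∀ᶠ y : ℝ in atTop, ∃ p : ℕ, p.Prime ∧ |y - Real.log p| < ε := by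
  obtain ⟨C, hC⟩ := exists_sum_div_mul_inv_one_add_sq_le (fun _ => vonMangoldt_nonneg)
    sum_Icc_vonMangoldt_le
  obtain ⟨l, hl1, hlC⟩ : ∃ l : ℝ, 1 ≤ l ∧ 4 / l * (1 + (ε ^ 2)⁻¹) * C < 1 / 16 := by
    have hlim : Tendsto (fun l : ℝ => 4 / l * (1 + (ε ^ 2)⁻¹) * C) atTop (𝓝 0) := by
      simpa using (((tendsto_const_nhds (x := (4 : ℝ))).div_atTop tendsto_id).mul_const
        (1 + (ε ^ 2)⁻¹)).mul_const C
    exact ((eventually_ge_atTop 1).and (hlim.eventually_lt_const (by norm_num))).exists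
  have hl : 0 < l := zero_lt_one.trans_le hl1
  have hnonprime := tendsto_tsum_mul_fejerKernel_of_summable
    summable_vonMangoldt_non_primes_div.norm hl
  have hexp : Tendsto (fun y : ℝ => l / 4 * Real.exp (-y)) atTop (𝓝 0) := by
    simpa using Real.tendsto_exp_neg_atTop_nhds_zero.const_mul (l / 4)
  filter_upwards [(tendsto_tsum_vonMangoldt_div_sub_tsum_one_div hl).eventually_const_lt
      (by norm_num : (-1 / 16 : ℝ) < 0),
    hnonprime.eventually_lt_const (by norm_num : (0 : ℝ) < 1 / 16),
    hexp.eventually_lt_const (by norm_num : (0 : ℝ) < 1 / 16)] with y hdiff hnonprime hexp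
  by_contra! hp
  have hupper := tsum_vonMangoldt_div_mul_fejerKernel_le hl hε (hC y) hp
  have hlower := quarter_sub_le_tsum_one_div_mul_fejerKernel hl1 y
  linarith

theorem eventually_exists_prime_mem_Ioc {ε : ℝ} (hε : 0 < ε) :
    ∀ᶠ n : ℕ in atTop, ∃ p : ℕ, p.Prime ∧ (1 - ε) * n < p ∧ p ≤ n := by
  have hlim : Tendsto (fun n : ℕ => Real.log n - ε / 2) atTop atTop :=
    tendsto_atTop_add_const_right _ _ (Real.tendsto_log_atTop.comp tendsto_natCast_atTop_atTop)
  filter_upwards [hlim.eventually (eventually_exists_prime_abs_sub_log_lt (half_pos hε)),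
    eventually_gt_atTop 0] with n ⟨p, hp, hpn⟩ hn
  have hn0 : (0 : ℝ) < n := Nat.cast_pos.mpr hn
  have hp0 : (0 : ℝ) < p := Nat.cast_pos.mpr hp.pos
  obtain ⟨hlt, hgt⟩ := abs_lt.mp hpn
  refine ⟨p, hp, ?_, ?_⟩
  · calc (1 - ε) * n ≤ Real.exp (-ε) * n := by gcongr; exact Real.one_sub_le_exp_neg ε
      _ = Real.exp (Real.log n - ε) := by
        rw [sub_eq_neg_add, Real.exp_add, Real.exp_log hn0]
      _ < p := (Real.lt_log_iff_exp_lt hp0).mp (by linarith)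
  · exact_mod_cast (Real.log_le_log_iff hp0 hn0).mp (by linarith)

end PrimesInShortIntervals

section Radical

open scoped Nat

lemma one_le_rad (n : ℕ) : 1 ≤ rad n :=
  Finset.prod_pos fun _ hp => (Nat.prime_of_mem_primeFactors hp).pos

lemma rad_mul_of_coprime {m n : ℕ} (h : m.Coprime n) : rad (m * n) = rad m * rad n := by
  rw [rad, h.primeFactors_mul, Finset.prod_union h.disjoint_primeFactors, rad, rad]

lemma rad_eq_prod_primesLE_filter_dvd {b n : ℕ} (hn : n ∈ Nat.smoothNumbers (b + 1)) :
    rad n = ∏ p ∈ b.primesLE with p ∣ n, p := by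
  refine Finset.prod_congr (Finset.ext fun p => ?_) fun _ _ => rfl
  have hn0 := Nat.ne_zero_of_mem_smoothNumbers hn
  simp only [Nat.mem_primeFactors, Finset.mem_filter, Nat.mem_primesLE]
  exact ⟨fun ⟨hp, hpn, _⟩ =>
      ⟨⟨Nat.lt_succ_iff.mp (Nat.mem_smoothNumbers'.mp hn p hp hpn), hp⟩, hpn⟩,
    fun ⟨⟨_, hp⟩, hpn⟩ => ⟨hp, hpn, hn0⟩⟩

lemma card_filter_dvd_add_one_add_le {p : ℕ} (hp : 0 < p) (m k : ℕ) :
    {i ∈ Finset.range k | p ∣ m + 1 + i}.card ≤ k / p + 1 := by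
  have hcount := Nat.count_add (fun i => p ∣ i + 1) m k
  simp only [Nat.count_eq_card_filter_range, Nat.card_multiples, Nat.add_div hp,
    Nat.add_right_comm m _ 1] at hcount
  split_ifs at hcount <;> omega

lemma prod_primesLE_pow_div_dvd_factorial (b k : ℕ) :
    ∏ p ∈ b.primesLE, p ^ (k / p) ∣ k ! := by
  refine Finset.prod_dvd_of_isRelPrime (fun p hp q hq hpq => ?_) fun p hp => ?_
  · exact Nat.coprime_iff_isRelPrime.mp (Nat.coprime_pow_primes _ _
      (Nat.mem_primesLE.mp hp).2 (Nat.mem_primesLE.mp hq).2 hpq)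
  · have hp0 := (Nat.mem_primesLE.mp hp).2.pos
    calc p ^ (k / p) = ∏ _i ∈ Finset.range (k / p), p := by simp
      _ ∣ ∏ _i ∈ Finset.range (k / p), p ! :=
        Finset.prod_dvd_prod_of_dvd _ _ fun _ _ => Nat.dvd_factorial hp0 le_rfl
      _ ∣ (∑ _i ∈ Finset.range (k / p), p)! := Nat.prod_factorial_dvd_factorial_sum _ _
      _ ∣ k ! := Nat.factorial_dvd_factorial (by simpa using Nat.div_mul_le_self k p)

lemma prod_rad_le_of_ascFactorial_mem_smoothNumbers {m k b : ℕ}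
    (hb : (m + 1).ascFactorial k ∈ Nat.smoothNumbers (b + 1)) :
    ∏ i ∈ Finset.range k, rad (m + 1 + i) ≤ 4 ^ b * k ! := by
  have hsmooth (i : ℕ) (hi : i ∈ Finset.range k) : m + 1 + i ∈ Nat.smoothNumbers (b + 1) := by
    rw [Nat.ascFactorial_eq_prod_range] at hb
    exact Nat.mem_smoothNumbers_of_dvd hb (Finset.dvd_prod_of_mem _ hi)
  calc ∏ i ∈ Finset.range k, rad (m + 1 + i)
      = ∏ i ∈ Finset.range k, ∏ p ∈ b.primesLE with p ∣ m + 1 + i, p :=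
        Finset.prod_congr rfl fun i hi => rad_eq_prod_primesLE_filter_dvd (hsmooth i hi)
    _ = ∏ p ∈ b.primesLE, p ^ {i ∈ Finset.range k | p ∣ m + 1 + i}.card := by
        simp only [Finset.prod_filter, ← Finset.prod_const]
        exact Finset.prod_comm
    _ ≤ ∏ p ∈ b.primesLE, p * p ^ (k / p) := by
        refine Finset.prod_le_prod' fun p hp => ?_
        have hp0 := (Nat.mem_primesLE.mp hp).2.pos
        rw [← pow_succ']
        exact Nat.pow_le_pow_right hp0 (card_filter_dvd_add_one_add_le hp0 m k)
    _ = primorial b * ∏ p ∈ b.primesLE, p ^ (k / p) := by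
        rw [Finset.prod_mul_distrib, primorial_eq_prod_primesLE]
    _ ≤ 4 ^ b * k ! := Nat.mul_le_mul (primorial_le_four_pow b)
        (Nat.le_of_dvd k.factorial_pos (prod_primesLE_pow_div_dvd_factorial b k))

end Radical

section ConsecutiveABC

open scoped Nat

/-- The abc inequality `c ≤ rad (a * b * c) ^ e` for the triples `1 + m = m + 1` only: this, with an
arbitrary exponent, is all that the finiteness argument uses of the abc conjecture. -/
def ConsecutiveABC (e : ℕ) : Prop :=
  ∀ m : ℕ, 0 < m → m + 1 ≤ rad (m * (m + 1)) ^ e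

lemma ExplicitABC.consecutiveABC (h : ExplicitABC) : ConsecutiveABC 2 := by
  intro m hm
  have hlt := h 1 m (m + 1) one_pos hm m.succ_pos (by simp) (by simp) (by simp) (add_comm 1 m)
  have hrad : (1 : ℝ) ≤ rad (m * (m + 1)) := Nat.one_le_cast.mpr (one_le_rad _)
  rw [one_mul] at hlt
  have hle : ((m + 1 : ℕ) : ℝ) ≤ (rad (m * (m + 1)) : ℝ) ^ (2 : ℝ) :=
    hlt.le.trans (Real.rpow_le_rpow_of_exponent_le hrad (by norm_num))
  exact_mod_cast hle

variable {e : ℕ}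

lemma ConsecutiveABC.exponent_pos (h : ConsecutiveABC e) : 0 < e := by
  by_contra! he
  have := h 1 one_pos
  simp [Nat.le_zero.mp he] at this

lemma ConsecutiveABC.pow_le_prod_rad_pow (h : ConsecutiveABC e) (m j : ℕ) :
    (m + 1) ^ j ≤ (∏ i ∈ Finset.range (2 * j), rad (m + 1 + i)) ^ e := by
  induction j with
  | zero => simp
  | succ j ih =>
    rw [mul_add_one, Finset.prod_range_succ, Finset.prod_range_succ, mul_assoc, mul_pow, pow_succ]
    refine Nat.mul_le_mul ih ?_
    have habc := h (m + 1 + 2 * j) (by omega)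
    rw [rad_mul_of_coprime (by simp)] at habc
    exact (by omega : m + 1 ≤ m + 1 + 2 * j + 1).trans habc

lemma ConsecutiveABC.pow_half_le (h : ConsecutiveABC e) {m k b : ℕ}
    (hb : (m + 1).ascFactorial k ∈ Nat.smoothNumbers (b + 1)) :
    (m + 1) ^ (k / 2) ≤ (4 ^ b * k ^ k) ^ e := by
  refine (h.pow_le_prod_rad_pow m (k / 2)).trans (Nat.pow_le_pow_left ?_ e)
  calc ∏ i ∈ Finset.range (2 * (k / 2)), rad (m + 1 + i)
      ≤ ∏ i ∈ Finset.range k, rad (m + 1 + i) :=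
        Finset.prod_le_prod_of_subset_of_one_le'
          (Finset.range_subset_range.mpr (Nat.mul_div_le k 2)) fun _ _ _ => one_le_rad _
    _ ≤ 4 ^ b * k ! := prod_rad_le_of_ascFactorial_mem_smoothNumbers hb
    _ ≤ 4 ^ b * k ^ k := Nat.mul_le_mul_left _ k.factorial_le_pow

lemma ConsecutiveABC.half_mul_log_le (h : ConsecutiveABC e) {m k b : ℕ} (hk : 0 < k)
    (hb : (m + 1).ascFactorial k ∈ Nat.smoothNumbers (b + 1)) :
    (k / 2 : ℕ) * Real.log (m + 1) ≤ e * (b * Real.log 4 + k * Real.log k) := by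
  have : (0 : ℝ) < k := Nat.cast_pos.mpr hk
  have := Real.log_le_log (by positivity)
    (by exact_mod_cast h.pow_half_le hb : (m + 1 : ℝ) ^ (k / 2) ≤ (4 ^ b * k ^ k) ^ e)
  rwa [Real.log_pow, Real.log_pow, Real.log_mul (by positivity) (by positivity), Real.log_pow,
    Real.log_pow] at this

lemma ConsecutiveABC.mul_log_le (h : ConsecutiveABC e) {m k b : ℕ} (hk : 2 ≤ k)
    (hkn : k ^ (6 * e) ≤ m + k) (hb : (m + 1).ascFactorial k ∈ Nat.smoothNumbers (b + 1)) :
    k * Real.log (m + k) ≤ 24 * e * b := by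
  have he : 1 ≤ e := h.exponent_pos
  have hk32 : 32 * k ≤ m + k := by
    calc 32 * k ≤ k ^ 5 * k := Nat.mul_le_mul_right k (Nat.pow_le_pow_left hk 5)
      _ = k ^ 6 := rfl
      _ ≤ k ^ (6 * e) := Nat.pow_le_pow_right (by omega) (by omega)
      _ ≤ m + k := hkn
  have hk0 : (0 : ℝ) < k := by exact_mod_cast zero_lt_two.trans_le hk
  have hn0 : (0 : ℝ) < m + k := by positivity
  have hlog2 : 0 < Real.log 2 := Real.log_pos one_lt_two
  have hlogn : 4 * Real.log 2 ≤ Real.log (m + k) := by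
    rw [← Real.log_rpow two_pos]
    refine Real.log_le_log (by norm_num) ?_
    norm_num
    exact_mod_cast (by omega : 16 ≤ m + k)
  have hlogm : Real.log (m + k) - Real.log 2 ≤ Real.log (m + 1) := by
    rw [← Real.log_div hn0.ne' two_ne_zero]
    refine Real.log_le_log (by positivity) ((div_le_iff₀ two_pos).mpr ?_)
    exact_mod_cast (by omega : m + k ≤ (m + 1) * 2)
  have hlogk : 6 * e * Real.log k ≤ Real.log (m + k) := by
    have := Real.log_le_log (by positivity) (by exact_mod_cast hkn : (k : ℝ) ^ (6 * e) ≤ m + k)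
    rw [Real.log_pow] at this
    exact_mod_cast this
  have hhalf : (k / 3 : ℝ) * (Real.log (m + k) - Real.log 2) ≤
      (k / 2 : ℕ) * Real.log (m + 1) := by
    have : (k : ℝ) ≤ 3 * (k / 2 : ℕ) := by exact_mod_cast (by omega : k ≤ 3 * (k / 2))
    gcongr <;> linarith
  have hk_logk := mul_le_mul_of_nonneg_left hlogk hk0.le
  have hk_log2 := mul_le_mul_of_nonneg_left hlogn hk0.le
  have heb : e * b * Real.log 2 ≤ e * b * 1 := by
    gcongr
    linarith [Real.log_two_lt_d9]
  have hlower := h.half_mul_log_le (by omega) hb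
  rw [Real.log_four_eq] at hlower
  linarith

theorem ConsecutiveABC.exists_pow_lt_factorial (h : ConsecutiveABC e) (C : ℕ) :
    ∃ N : ℕ, ∀ m k b : ℕ, N ≤ m + k → 2 ≤ k → k ^ (6 * e) ≤ m + k →
      (m + 1).ascFactorial k ∈ Nat.smoothNumbers (b + 1) → (m + k) ^ (C * k) < b ! := by
  have he : (0 : ℝ) < e := Nat.cast_pos.mpr h.exponent_pos
  obtain ⟨N, hN⟩ := eventually_atTop.mp ((Real.tendsto_log_atTop.comp
    tendsto_natCast_atTop_atTop).eventually_ge_atTop (12 * e * Real.exp (24 * C * e + 2)))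
  refine ⟨N, fun m k b hn hk hkn hb => ?_⟩
  have hlogn : 12 * e * Real.exp (24 * C * e + 2) ≤ Real.log (m + k) := by
    exact_mod_cast hN (m + k) hn
  have hmul := h.mul_log_le hk hkn hb
  have hb_exp : Real.exp (24 * C * e + 2) ≤ b := by
    have hk2 : 2 * Real.log (m + k) ≤ k * Real.log (m + k) := by
      gcongr
      · exact le_trans (by positivity) hlogn
      · exact_mod_cast hk
    have : 24 * e * Real.exp (24 * C * e + 2) ≤ 24 * e * b := by linarith
    exact le_of_mul_le_mul_left this (by positivity)
  have hb0 : (0 : ℝ) < b := (Real.exp_pos _).trans_le hb_exp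
  have hlogb := (Real.le_log_iff_exp_le hb0).mpr hb_exp
  by_contra! hle
  have hlog_fact : b * Real.log b - b ≤ C * (k * Real.log (m + k)) := by
    have hlog_le := Real.log_le_log (by positivity)
      (by exact_mod_cast hle : (b ! : ℝ) ≤ (m + k) ^ (C * k))
    rw [Real.log_pow, Nat.cast_mul, mul_assoc] at hlog_le
    have hstirling := Stirling.le_log_factorial_stirling (Nat.cast_pos.mp hb0).ne'
    have hlog2π : 0 ≤ Real.log (2 * Real.pi) := Real.log_nonneg (by linarith [Real.pi_gt_three])
    linarith [Real.log_natCast_nonneg b]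
  have hmulC := mul_le_mul_of_nonneg_left hmul C.cast_nonneg
  have hblog := mul_le_mul_of_nonneg_left hlogb hb0.le
  linarith

end ConsecutiveABC

section FewPrimes

open scoped Nat

lemma le_mul_of_factorial_le_pow {M C n k b : ℕ} (hk : 0 < k) (hnk : n ≤ k ^ M)
    (hb : b ! ≤ n ^ (C * k)) : b ≤ (M * C + 1) * k := by
  by_contra! hlt
  have hpow : k ! * (k + 1) ^ (M * C * k) < k ^ (M * C * k) := by
    calc k ! * (k + 1) ^ (M * C * k) ≤ (k + M * C * k)! := Nat.factorial_mul_pow_le_factorial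
      _ < b ! := (Nat.factorial_lt (by positivity)).mpr (by linarith)
      _ ≤ n ^ (C * k) := hb
      _ ≤ (k ^ M) ^ (C * k) := Nat.pow_le_pow_left hnk _
      _ = k ^ (M * C * k) := by rw [← pow_mul, mul_assoc]
  exact hpow.not_ge ((Nat.pow_le_pow_left k.le_succ _).trans
    (Nat.le_mul_of_pos_left _ k.factorial_pos))

lemma choose_le_pow_primeCounting {n k b : ℕ} (hn : 0 < n)
    (hb : n.choose k ∈ Nat.smoothNumbers (b + 1)) : n.choose k ≤ n ^ b.primeCounting := by
  have hsub : (n.choose k).primeFactors ⊆ b.primesLE :=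
    Nat.primeFactors_subset_of_mem_smoothNumbers hb
  calc n.choose k = ∏ p ∈ (n.choose k).primeFactors, p ^ (n.choose k).factorization p :=
        (Nat.prod_factorization_pow_eq_self (Nat.ne_zero_of_mem_smoothNumbers hb)).symm
    _ ≤ ∏ _p ∈ (n.choose k).primeFactors, n :=
        Finset.prod_le_prod' fun _ _ => Nat.pow_factorization_choose_le hn
    _ = n ^ (n.choose k).primeFactors.card := Finset.prod_const n
    _ ≤ n ^ b.primeCounting := by
        rw [← Nat.primesLE_card_eq_primeCounting]
        exact Nat.pow_le_pow_right hn (Finset.card_le_card hsub)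

lemma add_pow_le_pow_mul_choose (m k : ℕ) : (m + k) ^ k ≤ k ^ k * (m + k).choose k := by
  refine Nat.le_of_mul_le_mul_left ?_ k.factorial_pos
  rw [mul_left_comm, ← Nat.ascFactorial_eq_factorial_mul_choose, Nat.ascFactorial_eq_prod_range,
    ← Finset.prod_range_add_one_eq_factorial]
  have hterm (i : ℕ) (hi : i ∈ Finset.range k) : (i + 1) * (m + k) ≤ k * (m + 1 + i) := by
    have := Nat.mul_le_mul_right m (Nat.succ_le_of_lt (Finset.mem_range.mp hi))
    linarith
  simpa [Finset.prod_mul_distrib] using Finset.prod_le_prod' hterm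

lemma eventually_primeCounting_mul_le {D : ℕ} (hD : 0 < D) :
    ∀ᶠ k : ℕ in atTop, ((D * k).primeCounting : ℝ) * Real.log k ≤ 3 * D * k := by
  have hD1 : (1 : ℝ) ≤ D := Nat.one_le_cast.mpr hD
  have hlim : Tendsto (fun k : ℕ => (D * k : ℝ)) atTop atTop :=
    tendsto_natCast_atTop_atTop.const_mul_atTop (by positivity)
  filter_upwards [hlim.eventually (Chebyshev.eventually_primeCounting_le one_pos),
    eventually_gt_atTop 1] with k hπ hk
  have hk0 : (0 : ℝ) < k := by positivity
  have hlog_pos : 0 < Real.log k := Real.log_pos (Nat.one_lt_cast.mpr hk)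
  have hlog_le : Real.log k ≤ Real.log (D * k) :=
    Real.log_le_log hk0 (le_mul_of_one_le_left hk0.le hD1)
  have hlog4 : Real.log 4 ≤ 2 := by linarith [Real.log_four_eq, Real.log_two_lt_d9]
  rw [← Nat.cast_mul, Nat.floor_natCast, Nat.cast_mul,
    le_div_iff₀ (hlog_pos.trans_le hlog_le)] at hπ
  calc ((D * k).primeCounting : ℝ) * Real.log k
      ≤ (D * k).primeCounting * Real.log (D * k) := by gcongr
    _ ≤ (Real.log 4 + 1) * (D * k) := hπ
    _ ≤ 3 * (D * k) := by gcongr; linarith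
    _ = 3 * D * k := by ring

lemma mul_log_add_le {m k b : ℕ} (hk : 0 < k)
    (hb : (m + 1).ascFactorial k ∈ Nat.smoothNumbers (b + 1)) :
    k * Real.log (m + k) ≤ k * Real.log k + b.primeCounting * Real.log (m + k) := by
  have : (0 : ℝ) < k := Nat.cast_pos.mpr hk
  have hchoose : (m + k).choose k ∈ Nat.smoothNumbers (b + 1) := by
    refine Nat.mem_smoothNumbers_of_dvd hb ?_
    rw [Nat.ascFactorial_eq_factorial_mul_choose]
    exact Nat.dvd_mul_left _ _
  have hpow : (m + k) ^ k ≤ k ^ k * (m + k) ^ b.primeCounting :=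
    (add_pow_le_pow_mul_choose m k).trans
      (Nat.mul_le_mul_left _ (choose_le_pow_primeCounting (by omega) hchoose))
  have := Real.log_le_log (by positivity) (by exact_mod_cast hpow :
    (m + k : ℝ) ^ k ≤ (k : ℝ) ^ k * (m + k : ℝ) ^ b.primeCounting)
  rwa [Real.log_mul (by positivity) (by positivity), Real.log_pow, Real.log_pow,
    Real.log_pow] at this

theorem exists_add_le_mul_of_factorial_le_pow (M C : ℕ) :
    ∃ A : ℝ, 0 < A ∧ ∃ N : ℕ, ∀ m k b : ℕ, N ≤ m + k → m + k ≤ k ^ M →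
      (m + 1).ascFactorial k ∈ Nat.smoothNumbers (b + 1) → b ! ≤ (m + k) ^ (C * k) →
        (m + k : ℝ) ≤ A * k := by
  set D := M * C + 1
  obtain ⟨K, hK⟩ := eventually_atTop.mp (eventually_primeCounting_mul_le (D := D) (by omega))
  refine ⟨Real.exp (3 * D * M), Real.exp_pos _, K ^ M + 1, fun m k b hn hnk hb hfact => ?_⟩
  have hKk : K < k := lt_of_pow_lt_pow_left' M (hn.trans hnk)
  have hk0 : (0 : ℝ) < k := Nat.cast_pos.mpr (by omega)
  have hn0 : (0 : ℝ) < m + k := by positivity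
  have hlog_nonneg : 0 ≤ Real.log (m + k) :=
    Real.log_nonneg (by exact_mod_cast (by omega : 1 ≤ m + k))
  have hπ : (b.primeCounting : ℝ) ≤ (D * k).primeCounting := by
    exact_mod_cast Nat.monotone_primeCounting (le_mul_of_factorial_le_pow (by omega) hnk hfact)
  have hlog_le : Real.log (m + k) ≤ M * Real.log k := by
    rw [← Real.log_pow]
    exact Real.log_le_log hn0 (by exact_mod_cast hnk)
  have hlog : k * Real.log (m + k) ≤ k * (3 * D * M + Real.log k) := by
    calc k * Real.log (m + k)
        ≤ k * Real.log k + (D * k).primeCounting * (M * Real.log k) :=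
          (mul_log_add_le (by omega) hb).trans (by gcongr)
      _ = k * Real.log k + (D * k).primeCounting * Real.log k * M := by ring
      _ ≤ k * Real.log k + 3 * D * k * M := by
          linarith [mul_le_mul_of_nonneg_right (hK k hKk.le) M.cast_nonneg]
      _ = k * (3 * D * M + Real.log k) := by ring
  refine (Real.log_le_log_iff hn0 (by positivity)).mp ?_
  rw [Real.log_mul (Real.exp_ne_zero _) hk0.ne', Real.log_exp]
  exact le_of_mul_le_mul_left hlog hk0

end FewPrimes

section Finiteness

open scoped Nat

lemma exists_prime_mem_Ioc_of_le_mul {A : ℝ} (hA : 0 < A) :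
    ∃ N : ℕ, ∀ m k : ℕ, N ≤ m + k → (m + k : ℝ) ≤ A * k →
      ∃ p : ℕ, p.Prime ∧ m < p ∧ p ≤ m + k := by
  obtain ⟨N, hN⟩ := eventually_atTop.mp (eventually_exists_prime_mem_Ioc (inv_pos.mpr hA))
  refine ⟨N, fun m k hn hnk => ?_⟩
  obtain ⟨p, hp, hlt, hle⟩ := hN (m + k) hn
  refine ⟨p, hp, ?_, hle⟩
  have hk : A⁻¹ * (m + k) ≤ k := (inv_mul_le_iff₀ hA).mpr hnk
  push_cast at hlt
  exact_mod_cast (by linarith : (m : ℝ) < p)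

theorem ConsecutiveABC.exists_pow_lt_factorial_of_no_prime {e : ℕ} (h : ConsecutiveABC e) (C : ℕ) :
    ∃ N : ℕ, ∀ m k b : ℕ, N ≤ m + k → 2 ≤ k → (∀ p : ℕ, p.Prime → p ≤ m + k → p ≤ m) →
      (m + 1).ascFactorial k ∈ Nat.smoothNumbers (b + 1) → (m + k) ^ (C * k) < b ! := by
  obtain ⟨N₁, hN₁⟩ := h.exists_pow_lt_factorial C
  obtain ⟨A, hA, N₂, hN₂⟩ := exists_add_le_mul_of_factorial_le_pow (6 * e) C
  obtain ⟨N₃, hN₃⟩ := exists_prime_mem_Ioc_of_le_mul hA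
  refine ⟨N₁ + N₂ + N₃, fun m k b hn hk hprime hb => ?_⟩
  rcases le_total (k ^ (6 * e)) (m + k) with hkn | hnk
  · exact hN₁ m k b (by omega) hk hkn hb
  · by_contra! hle
    obtain ⟨p, hp, hmp, hpn⟩ := hN₃ m k (by omega) (hN₂ m k b (by omega) hnk hb hle)
    exact hmp.not_ge (hprime p hp hpn)

variable {ι : Type*}

lemma factorial_sup_le_prod_factorial (s : Finset ι) (a : ι → ℕ) :
    (s.sup a)! ≤ ∏ l ∈ s, (a l)! := by
  refine Finset.sup_induction (p := fun b => b ! ≤ ∏ l ∈ s, (a l)!) ?_ ?_ fun l hl => ?_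
  · exact Finset.one_le_prod' fun l _ => (a l).factorial_pos
  · intro b hb c hc
    rcases max_choice b c with hmax | hmax <;> simpa only [Nat.max_def, hmax]
  · exact Nat.le_of_dvd (Finset.prod_pos fun l _ => (a l).factorial_pos)
      (Finset.dvd_prod_of_mem _ hl)

lemma exists_le_of_prime_dvd_prod_factorial {s : Finset ι} {a : ι → ℕ} {p : ℕ} (hp : p.Prime)
    (h : p ∣ ∏ l ∈ s, (a l)!) : ∃ l ∈ s, p ≤ a l := by
  obtain ⟨l, hl, hpl⟩ := (hp.prime.dvd_finsetProd_iff _).mp h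
  exact ⟨l, hl, hp.dvd_factorial.mp hpl⟩

lemma prod_factorial_mem_smoothNumbers (s : Finset ι) (a : ι → ℕ) :
    ∏ l ∈ s, (a l)! ∈ Nat.smoothNumbers (s.sup a + 1) := by
  refine Nat.mem_smoothNumbers'.mpr fun p hp hdvd => ?_
  obtain ⟨l, hl, hpl⟩ := exists_le_of_prime_dvd_prod_factorial hp hdvd
  exact Nat.lt_succ_iff.mpr (hpl.trans (Finset.le_sup hl))

variable [Fintype ι]

lemma prod_compl_pair_factorial_eq [DecidableEq ι] {a : ι → ℕ} {x y : ι} (hxy : x ≠ y) {k₁ k₂ : ℕ}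
    (h : ∏ l, (a l)! = (a x + k₁)! * (a y + k₂)!) :
    ∏ l ∈ {x, y}ᶜ, (a l)! = (a x + 1).ascFactorial k₁ * (a y + 1).ascFactorial k₂ := by
  rw [← Finset.prod_mul_prod_compl {x, y}, Finset.prod_pair hxy,
    ← Nat.factorial_mul_ascFactorial, ← Nat.factorial_mul_ascFactorial, mul_mul_mul_comm] at h
  exact Nat.eq_of_mul_eq_mul_left (by positivity) h

theorem ConsecutiveABC.exists_lt_of_prod_factorial_eq {e : ℕ} (h : ConsecutiveABC e) (c₀ : ℕ)
    {x y : ι} (hxy : x ≠ y) :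
    ∃ N : ℕ, ∀ (a : ι → ℕ) (k₁ k₂ : ℕ), (∀ l, a l ≤ a x) → a y + k₂ ≤ a x + k₁ →
      ∏ l, (a l)! = (a x + k₁)! * (a y + k₂)! → 2 ≤ k₁ → k₂ ≤ c₀ * k₁ → a x + k₁ < N := by
  classical
  obtain ⟨N, hN⟩ := h.exists_pow_lt_factorial_of_no_prime (1 + c₀)
  refine ⟨N, fun a k₁ k₂ hmax hn heq hk₁ hk₂ => ?_⟩
  by_contra! hlarge
  have hprod := prod_compl_pair_factorial_eq hxy heq
  set b := Finset.sup {x, y}ᶜ a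
  have hprime (p : ℕ) (hp : p.Prime) (hpn : p ≤ a x + k₁) : p ≤ a x := by
    have hdvd : p ∣ ∏ l, (a l)! := heq ▸ (Nat.dvd_factorial hp.pos hpn).mul_right _
    obtain ⟨l, -, hpl⟩ := exists_le_of_prime_dvd_prod_factorial hp hdvd
    exact hpl.trans (hmax l)
  have hsmooth : (a x + 1).ascFactorial k₁ ∈ Nat.smoothNumbers (b + 1) :=
    Nat.mem_smoothNumbers_of_dvd (prod_factorial_mem_smoothNumbers _ a)
      (hprod ▸ Nat.dvd_mul_right _ _)
  refine (hN (a x) k₁ b hlarge hk₁ hprime hsmooth).not_ge ?_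
  calc b ! ≤ ∏ l ∈ {x, y}ᶜ, (a l)! := factorial_sup_le_prod_factorial _ a
    _ = (a x + 1).ascFactorial k₁ * (a y + 1).ascFactorial k₂ := hprod
    _ ≤ (a x + k₁) ^ k₁ * (a y + k₂) ^ k₂ :=
        Nat.mul_le_mul (Nat.ascFactorial_le_pow_add _ _) (Nat.ascFactorial_le_pow_add _ _)
    _ ≤ (a x + k₁) ^ k₁ * (a x + k₁) ^ (c₀ * k₁) := by
        gcongr
        omega
    _ = (a x + k₁) ^ ((1 + c₀) * k₁) := by rw [← pow_add, one_add_mul]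

theorem finitely_many_solutions_s_eq_two_general {e : ℕ} (habc : ConsecutiveABC e) (c₀ : ℕ)
    {x y : ι} (hxy : x ≠ y) :
    {p : (ι → ℕ) × ℕ × ℕ | (∀ l, p.1 l ≤ p.1 x) ∧ p.2.2 ≤ p.2.1 ∧
      ∏ l, (p.1 l)! = p.2.1 ! * p.2.2 ! ∧ p.1 x + 2 ≤ p.2.1 ∧ p.1 y ≤ p.2.2 ∧
      p.2.2 - p.1 y ≤ c₀ * (p.2.1 - p.1 x)}.Finite := by
  obtain ⟨N, hN⟩ := habc.exists_lt_of_prod_factorial_eq c₀ hxy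
  refine ((Set.Finite.pi' fun _ => Set.finite_Iic N).prod
    ((Set.finite_Iic N).prod (Set.finite_Iic N))).subset ?_
  rintro ⟨a, n₁, n₂⟩ ⟨hmax, hn, heq, hx, hy, hc₀⟩
  dsimp only at hmax hn hx hy
  have hlt := hN a (n₁ - a x) (n₂ - a y) hmax (by omega)
    (by rwa [Nat.add_sub_of_le (by omega), Nat.add_sub_of_le hy]) (by omega) hc₀
  exact ⟨fun l => (hmax l).trans (by omega), (by omega : n₁ ≤ N), (by omega : n₂ ≤ N)⟩

end Finiteness

/-- Under the explicit abc conjecture, for fixed `t ≥ 3`, `2 ≤ i ≤ t` and `c₀ ≥ 1`,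
the equation `∏ a_l ! = n₁! * n₂!` has only finitely many nontrivial solutions with
`a₁ ≥ ⋯ ≥ a_t ≥ 2`, `n₁ ≥ n₂ ≥ 2`, `|a_l - n_j| ≥ 2` for all `l, j`,
`n₁ > a₁`, `n₂ > a_i` and `n₂ - a_i ≤ c₀ (n₁ - a₁)`. -/
theorem finitely_many_solutions_s_eq_two
    (habc : ExplicitABC) (t : ℕ) (ht : 3 ≤ t) (i : ℕ) (hi2 : 2 ≤ i) (hit : i ≤ t)
    (c₀ : ℕ) (hc₀ : 0 < c₀) :
    {p : (Fin t → ℕ) × ℕ × ℕ |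
      (∀ l l' : Fin t, l ≤ l' → p.1 l' ≤ p.1 l) ∧
      (∀ l : Fin t, 2 ≤ p.1 l) ∧
      2 ≤ p.2.2 ∧ p.2.2 ≤ p.2.1 ∧
      (∏ l : Fin t, Nat.factorial (p.1 l)) =
        Nat.factorial p.2.1 * Nat.factorial p.2.2 ∧
      (∀ l : Fin t,
        2 ≤ |(p.1 l : ℤ) - (p.2.1 : ℤ)| ∧ 2 ≤ |(p.1 l : ℤ) - (p.2.2 : ℤ)|) ∧
      p.1 ⟨0, by omega⟩ < p.2.1 ∧
      p.1 ⟨i - 1, by omega⟩ < p.2.2 ∧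
      p.2.2 - p.1 ⟨i - 1, by omega⟩ ≤ c₀ * (p.2.1 - p.1 ⟨0, by omega⟩)}.Finite := by
  refine (finitely_many_solutions_s_eq_two_general habc.consecutiveABC c₀ (x := ⟨0, by omega⟩)
    (y := ⟨i - 1, by omega⟩) (by rw [ne_eq, Fin.mk.injEq]; omega)).subset ?_
  rintro p ⟨hanti, -, -, hn, hprod, hgap, hx, hy, hc⟩
  have hgap_x := (hgap ⟨0, by omega⟩).1
  rw [abs_of_neg (by omega)] at hgap_x
  exact ⟨fun l => hanti _ l (Nat.zero_le _), hn, hprod, by omega, hy.le, hc⟩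
end

section
/- Fix a positive integer c₀ ≥ 1. For N → ∞, the quantity (1/N⁵)·#{(a₁, a₂, a₃, n₁, n₂) ∈ {1,…,N}⁵ : n₁ ≥ n₂, a₁ ≥ a₂ ≥ a₃, n₁ > a₁, n₂ > a₂, and n₂ − a₂ ≤ c₀·(n₁ − a₁)} converges to 1/60 − 1/(120·c₀); in particular, this asymptotic density is positive. -/
/-!
For a tuple `(a₁, a₂, a₃, n₁, n₂)` put `m = n₁`, `j = n₁ - a₃`, `d = n₁ - a₂`, `z = n₁ - a₁` and
`y = n₂ - a₂`. The order constraints become `1 ≤ z, y ≤ d ≤ j < m ≤ N`, and the remaining one is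
`y ≤ c z`. So the number of tuples is the threefold iterated partial sum of the number of pairs
`(z, y) ∈ {1, …, d}²` with `y ≤ c z`, which is itself the sum over `m ≤ d` of the number of those
pairs with `max z y = m`. The part of that shell with `z = m` has about `min 1 c · m` elements, the
part with `y = m` about `max 0 (1 - 1 / c) · m`; for `c ≥ 1` the total is about `(2 - 1 / c) m`. By
the Stolz–Cesàro theorem each summation turns `u n ~ L n ^ k` into
`∑ u i ~ L / (k + 1) · n ^ (k + 1)`, so the density is `(2 - 1 / c) / (2 · 3 · 4 · 5)`.
-/

open Filter Finset
open scoped Topology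

section StolzCesaro

theorem tendsto_sum_range_div_sum_range {u v : ℕ → ℝ} {L : ℝ} (hv : ∀ n, 0 < v n)
    (hv_sum : Tendsto (fun n ↦ ∑ i ∈ range n, v i) atTop atTop)
    (h : Tendsto (fun n ↦ u n / v n) atTop (𝓝 L)) :
    Tendsto (fun n ↦ (∑ i ∈ range n, u i) / ∑ i ∈ range n, v i) atTop (𝓝 L) := by
  have h_term : (fun n ↦ u n - L * v n) =o[atTop] v := by
    refine (Asymptotics.isLittleO_iff_tendsto fun n hn ↦ absurd hn (hv n).ne').2 ?_
    refine (tendsto_sub_nhds_zero_iff.2 h).congr fun n ↦ ?_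
    rw [sub_div, mul_div_cancel_right₀ _ (hv n).ne']
  have h_sum := (h_term.sum_range (fun n ↦ (hv n).le) hv_sum).tendsto_div_nhds_zero
  refine tendsto_sub_nhds_zero_iff.1 (h_sum.congr' ?_)
  filter_upwards [hv_sum.eventually_ne_atTop 0] with n hn
  rw [sum_sub_distrib, ← mul_sum, sub_div, mul_div_cancel_right₀ _ hn]

theorem tendsto_succ_pow_sub_pow_div_pow (k : ℕ) :
    Tendsto (fun n : ℕ ↦ (((n + 1 : ℕ) : ℝ) ^ (k + 1) - (n : ℝ) ^ (k + 1)) / (n : ℝ) ^ k) atTop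
      (𝓝 (k + 1)) := by
  have h_slope := (hasDerivAt_pow (k + 1) (1 : ℝ)).tendsto_slope_zero
  have h_inv : Tendsto (fun n : ℕ ↦ (n : ℝ)⁻¹) atTop (𝓝[≠] 0) :=
    (tendsto_inv_atTop_nhdsGT_zero.mono_right (nhdsGT_le_nhdsNE 0)).comp
      tendsto_natCast_atTop_atTop
  have h_lim := h_slope.comp h_inv
  simp only [one_pow, mul_one, Nat.cast_add, Nat.cast_one] at h_lim
  refine h_lim.congr' ?_
  filter_upwards [eventually_ne_atTop 0] with n hn
  have hn' : (n : ℝ) ≠ 0 := Nat.cast_ne_zero.2 hn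
  simp only [Function.comp_apply, inv_inv, smul_eq_mul, Nat.cast_add, Nat.cast_one]
  rw [show 1 + (n : ℝ)⁻¹ = (n + 1) / n by field_simp, div_pow]
  field_simp
  ring

theorem tendsto_sum_range_div_pow {u : ℕ → ℝ} {k : ℕ} {L : ℝ}
    (h : Tendsto (fun n ↦ u n / (n : ℝ) ^ k) atTop (𝓝 L)) :
    Tendsto (fun n ↦ (∑ i ∈ range n, u i) / (n : ℝ) ^ (k + 1)) atTop (𝓝 (L / (k + 1))) := by
  have h_telescope (n : ℕ) :
      ∑ i ∈ range n, (((i + 1 : ℕ) : ℝ) ^ (k + 1) - (i : ℝ) ^ (k + 1)) = (n : ℝ) ^ (k + 1) :=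
    (sum_range_sub (fun i : ℕ ↦ (i : ℝ) ^ (k + 1)) n).trans (by simp)
  suffices Tendsto (fun n ↦ (∑ i ∈ range n, u i) /
      ∑ i ∈ range n, (((i + 1 : ℕ) : ℝ) ^ (k + 1) - (i : ℝ) ^ (k + 1))) atTop (𝓝 (L / (k + 1))) by
    simpa only [h_telescope] using this
  refine tendsto_sum_range_div_sum_range (fun n ↦ sub_pos.2 ?_) ?_ ?_
  · gcongr
    exact n.lt_succ_self
  · simp_rw [h_telescope]
    exact (tendsto_pow_atTop k.succ_ne_zero).comp tendsto_natCast_atTop_atTop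
  · refine (h.div (tendsto_succ_pow_sub_pow_div_pow k) k.cast_add_one_ne_zero).congr' ?_
    filter_upwards [eventually_ne_atTop 0] with n hn
    exact div_div_div_cancel_right₀ (pow_ne_zero k (Nat.cast_ne_zero.2 hn)) _ _

theorem tendsto_sum_range_succ_div_pow {u : ℕ → ℝ} {k : ℕ} {L : ℝ}
    (h : Tendsto (fun n ↦ u n / (n : ℝ) ^ k) atTop (𝓝 L)) :
    Tendsto (fun n ↦ (∑ i ∈ range (n + 1), u i) / (n : ℝ) ^ (k + 1)) atTop (𝓝 (L / (k + 1))) := by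
  have h_last : Tendsto (fun n ↦ u n / (n : ℝ) ^ (k + 1)) atTop (𝓝 0) := by
    simpa [div_div, pow_succ] using h.div_atTop tendsto_natCast_atTop_atTop
  simpa [sum_range_succ, add_div] using (tendsto_sum_range_div_pow h).add h_last

end StolzCesaro

section Counting

variable (R : ℕ → ℕ → Prop) [DecidableRel R]

/-- The pairs `(z, y) ∈ {1, …, d}²` with `R z y`. In the application `z = n₁ - a₁`, `y = n₂ - a₂`,
and `R z y` is the slope condition `y ≤ c z`. -/
def relatedPairs (d : ℕ) : Finset (ℕ × ℕ) :=
  {q ∈ Icc 1 d ×ˢ Icc 1 d | R q.1 q.2}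

/-- The tuples `p = (a₁, a₂, a₃, n₁, n₂) ∈ {1, …, N}⁵` with `n₁ ≥ n₂`, `a₁ ≥ a₂ ≥ a₃`, `n₁ > a₁`,
`n₂ > a₂` and `R (n₁ - a₁) (n₂ - a₂)`. The strict inequalities make both truncated differences
genuine. -/
def constrainedTuples (N : ℕ) : Finset (ℕ × ℕ × ℕ × ℕ × ℕ) :=
  {p ∈ Icc 1 N ×ˢ Icc 1 N ×ˢ Icc 1 N ×ˢ Icc 1 N ×ˢ Icc 1 N |
    p.2.2.2.2 ≤ p.2.2.2.1 ∧
    p.2.1 ≤ p.1 ∧ p.2.2.1 ≤ p.2.1 ∧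
    p.1 < p.2.2.2.1 ∧ p.2.1 < p.2.2.2.2 ∧
    R (p.2.2.2.1 - p.1) (p.2.2.2.2 - p.2.1)}

theorem card_relatedPairs (d : ℕ) :
    #(relatedPairs R d) =
      ∑ m ∈ range (d + 1), (#{y ∈ Icc 1 m | R m y} + #{z ∈ Ico 1 m | R z m}) := by
  simp only [relatedPairs, card_filter, sum_product]
  induction d with
  | zero => simp
  | succ d ih =>
    have h_column : ∑ z ∈ Icc 1 (d + 1), ∑ y ∈ Icc 1 (d + 1), (if R z y then 1 else 0) =
        ∑ z ∈ Icc 1 d, ∑ y ∈ Icc 1 d, (if R z y then 1 else 0) +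
          ∑ z ∈ Icc 1 d, (if R z (d + 1) then 1 else 0) +
          ∑ y ∈ Icc 1 (d + 1), (if R (d + 1) y then 1 else 0) := by
      rw [sum_Icc_succ_top (by lia), ← sum_add_distrib]
      simp only [sum_Icc_succ_top (show 1 ≤ d + 1 by lia)]
    rw [h_column, ih, sum_range_succ _ (d + 1), Ico_add_one_right_eq_Icc]
    ring

theorem card_constrainedTuples (N : ℕ) :
    #(constrainedTuples R N) =
      ∑ m ∈ range (N + 1), ∑ j ∈ range m, ∑ d ∈ range (j + 1), #(relatedPairs R d) := by
  simp only [← card_sigma]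
  refine card_nbij'
    (fun ⟨a₁, a₂, a₃, n₁, n₂⟩ ↦ ⟨n₁, n₁ - a₃, n₁ - a₂, n₁ - a₁, n₂ - a₂⟩)
    (fun ⟨m, j, d, z, y⟩ ↦ (m - z, m - d, m - j, m, y + (m - d)))
    ?_ ?_ ?_ ?_
  · rintro ⟨a₁, a₂, a₃, n₁, n₂⟩ hp
    simp only [constrainedTuples, relatedPairs, mem_coe, mem_filter, mem_product, mem_Icc,
      mem_sigma, mem_range] at hp ⊢
    grind
  · rintro ⟨m, j, d, z, y⟩ hq
    simp only [constrainedTuples, relatedPairs, mem_coe, mem_filter, mem_product, mem_Icc,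
      mem_sigma, mem_range] at hq ⊢
    have hz : m - (m - z) = z := by lia
    rw [hz, Nat.add_sub_cancel]
    exact ⟨by lia, by lia, by lia, by lia, by lia, by lia, hq.2.2.2.2⟩
  · rintro ⟨a₁, a₂, a₃, n₁, n₂⟩ hp
    simp only [constrainedTuples, mem_coe, mem_filter, mem_product, mem_Icc] at hp
    grind
  · rintro ⟨m, j, d, z, y⟩ hq
    simp only [relatedPairs, mem_coe, mem_filter, mem_product, mem_Icc, mem_sigma,
      mem_range] at hq
    grind

variable {R}

theorem tendsto_card_constrainedTuples_div_pow {κ : ℝ}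
    (h : Tendsto (fun d : ℕ ↦ (#(relatedPairs R d) : ℝ) / (d : ℝ) ^ 2) atTop (𝓝 κ)) :
    Tendsto (fun N : ℕ ↦ (#(constrainedTuples R N) : ℝ) / (N : ℝ) ^ 5) atTop (𝓝 (κ / 60)) := by
  have h_iterated := tendsto_sum_range_succ_div_pow <| tendsto_sum_range_div_pow <|
    tendsto_sum_range_succ_div_pow h
  simp only [card_constrainedTuples, Nat.cast_sum]
  convert h_iterated using 2
  push_cast
  ring

end Counting

section Slope

theorem min_add_max_div_eq_of_one_le {c : ℝ} (hc : 1 ≤ c) :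
    (min 1 c + max 0 (1 - c⁻¹)) / 120 = 1 / 60 - 1 / (120 * c) := by
  rw [min_eq_left hc, max_eq_right (sub_nonneg.2 (inv_le_one_of_one_le₀ hc))]
  ring

theorem card_filter_Icc_natCast_le_mul (c : ℝ) (m : ℕ) :
    #{y ∈ Icc 1 m | ((y : ℕ) : ℝ) ≤ c * m} = min m ⌊c * m⌋₊ := by
  have h_eq : {y ∈ Icc 1 m | ((y : ℕ) : ℝ) ≤ c * m} = Icc 1 (min m ⌊c * m⌋₊) := by
    ext y
    simp only [mem_filter, mem_Icc, le_min_iff, and_assoc]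
    refine and_congr_right fun hy ↦ and_congr_right fun _ ↦ ?_
    exact (Nat.le_floor_iff' (Nat.one_le_iff_ne_zero.1 hy)).symm
  rw [h_eq, Nat.card_Icc, Nat.add_sub_cancel]

theorem card_filter_Ico_le_mul_natCast {c : ℝ} (hc : 0 < c) (m : ℕ) :
    #{z ∈ Ico 1 m | (m : ℝ) ≤ c * ((z : ℕ) : ℝ)} = m - ⌈c⁻¹ * m⌉₊ := by
  rcases m.eq_zero_or_pos with rfl | hm
  · simp
  have h_ceil : 0 < ⌈c⁻¹ * m⌉₊ := Nat.ceil_pos.2 (by positivity)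
  have h_eq : {z ∈ Ico 1 m | (m : ℝ) ≤ c * ((z : ℕ) : ℝ)} = Ico ⌈c⁻¹ * m⌉₊ m := by
    ext z
    have h_iff : ⌈c⁻¹ * m⌉₊ ≤ z ↔ (m : ℝ) ≤ c * z := Nat.ceil_le.trans (inv_mul_le_iff₀ hc)
    simp only [mem_filter, mem_Ico, ← h_iff]
    lia
  rw [h_eq, Nat.card_Ico]

theorem tendsto_card_relatedPairs_le_mul_div_sq {c : ℝ} (hc : 0 < c) :
    Tendsto (fun d : ℕ ↦ (#(relatedPairs (fun z y ↦ (y : ℝ) ≤ c * z) d) : ℝ) / (d : ℝ) ^ 2) atTop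
      (𝓝 ((min 1 c + max 0 (1 - c⁻¹)) / 2)) := by
  have h_floor : Tendsto (fun m : ℕ ↦ (⌊c * m⌋₊ : ℝ) / m) atTop (𝓝 c) :=
    (tendsto_nat_floor_mul_div_atTop hc.le).comp tendsto_natCast_atTop_atTop
  have h_ceil : Tendsto (fun m : ℕ ↦ (⌈c⁻¹ * m⌉₊ : ℝ) / m) atTop (𝓝 c⁻¹) :=
    (tendsto_nat_ceil_mul_div_atTop (inv_nonneg.2 hc.le)).comp tendsto_natCast_atTop_atTop
  have h_cast_sub (a b : ℕ) : ((a - b : ℕ) : ℝ) = max 0 ((a : ℝ) - b) := by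
    rcases le_total b a with h | h <;> simp [h]
  have h_shell : Tendsto
      (fun m : ℕ ↦ ((min m ⌊c * m⌋₊ + (m - ⌈c⁻¹ * m⌉₊) : ℕ) : ℝ) / (m : ℝ) ^ 1) atTop
      (𝓝 (min 1 c + max 0 (1 - c⁻¹))) := by
    refine ((tendsto_const_nhds.min h_floor).add
      (tendsto_const_nhds.max (h_ceil.const_sub 1))).congr' ?_
    filter_upwards [eventually_gt_atTop 0] with m hm
    have hm' : (0 : ℝ) < m := Nat.cast_pos.2 hm
    rw [pow_one, Nat.cast_add, Nat.cast_min, h_cast_sub, add_div, ← min_div_div_right hm'.le,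
      ← max_div_div_right hm'.le, sub_div, div_self hm'.ne', zero_div]
  simpa [card_relatedPairs, card_filter_Icc_natCast_le_mul c,
    card_filter_Ico_le_mul_natCast hc, one_add_one_eq_two] using
    tendsto_sum_range_succ_div_pow h_shell

end Slope

theorem density_of_constrained_tuples_general {c : ℝ} (hc : 0 < c) :
    Tendsto (fun N : ℕ ↦
        (#(constrainedTuples (fun z y ↦ (y : ℝ) ≤ c * z) N) : ℝ) / (N : ℝ) ^ 5) atTop
      (𝓝 ((min 1 c + max 0 (1 - c⁻¹)) / 120)) ∧
    0 < (min 1 c + max 0 (1 - c⁻¹)) / 120 := by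
  refine ⟨?_, by positivity⟩
  have h := tendsto_card_constrainedTuples_div_pow (tendsto_card_relatedPairs_le_mul_div_sq hc)
  rwa [div_div, show (2 : ℝ) * 60 = 120 by norm_num] at h

/-- For a fixed positive integer `c₀`, the proportion among tuples
`(a₁, a₂, a₃, n₁, n₂) ∈ {1, …, N}⁵` of those satisfying `n₁ ≥ n₂`, `a₁ ≥ a₂ ≥ a₃`,
`n₁ > a₁`, `n₂ > a₂` and `n₂ - a₂ ≤ c₀ (n₁ - a₁)` converges, as `N → ∞`, to
`1/60 - 1/(120 c₀)`; in particular this asymptotic density is positive.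
Tuples are encoded as `p = (a₁, a₂, a₃, n₁, n₂)`. -/
theorem density_of_constrained_tuples (c₀ : ℕ) (hc₀ : 1 ≤ c₀) :
    Filter.Tendsto (fun N : ℕ =>
      (((Finset.Icc 1 N ×ˢ Finset.Icc 1 N ×ˢ Finset.Icc 1 N ×ˢ
          Finset.Icc 1 N ×ˢ Finset.Icc 1 N).filter
        (fun p : ℕ × ℕ × ℕ × ℕ × ℕ =>
          p.2.2.2.2 ≤ p.2.2.2.1 ∧
          p.2.1 ≤ p.1 ∧ p.2.2.1 ≤ p.2.1 ∧
          p.1 < p.2.2.2.1 ∧ p.2.1 < p.2.2.2.2 ∧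
          p.2.2.2.2 - p.2.1 ≤ c₀ * (p.2.2.2.1 - p.1))).card : ℝ) / (N : ℝ) ^ 5)
      Filter.atTop
      (nhds (1 / 60 - 1 / (120 * (c₀ : ℝ)))) ∧
    (0 : ℝ) < 1 / 60 - 1 / (120 * (c₀ : ℝ)) := by
  have hc : (1 : ℝ) ≤ c₀ := Nat.one_le_cast.2 hc₀
  rw [← min_add_max_div_eq_of_one_le hc]
  exact_mod_cast density_of_constrained_tuples_general (zero_lt_one.trans_le hc)
end

section
/- For every real number ν > 1, one has ∑_{p ≤ ν, p prime} (log p)/p < log ν. -/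
/-!
Since `log n! = ∑_{d ≤ n} Λ(d) ⌊n/d⌋` and `⌊n/d⌋ ≥ (n + 1)/d - 1`, any finite set `D` satisfies
`(n + 1) ∑_{d ∈ D} Λ(d)/d ≤ log n! + ∑_{d ∈ D} Λ(d)`. For `D` the set of primes up to `n`, the
bounds `log n! ≤ (n + 1) log n - n + 1` and `θ(n) ≤ n log 4` fall short of the claim by about
`(log 4 - 1) n`, that is `0.386 n`. Adding `4, 8, 9, 16` to `D` gains about
`(7/16 log 2 + 1/9 log 3) n`, that is `0.425 n`, which is enough for `n ≥ 100`. For smaller `n`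
the binary logarithms of `p ^ 2` and `n ^ 2` are rounded to integers.
-/

open ArithmeticFunction Chebyshev Finset Nat

theorem log_factorial_le {n : ℕ} (hn : 1 ≤ n) :
    Real.log n ! ≤ (n + 1) * Real.log n - n + 1 := by
  induction n, hn using Nat.le_induction with
  | base => simp
  | succ n hn ih =>
    have : (0 : ℝ) < n := by exact_mod_cast hn
    have log_succ_factorial : Real.log (n + 1)! = Real.log (n + 1) + Real.log n ! := by
      rw [factorial_succ, cast_mul, cast_succ, Real.log_mul (by positivity) (by positivity)]
    have one_le_log_increment : 1 ≤ (n + 1) * (Real.log (n + 1) - Real.log n) := by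
      rw [← Real.log_div (by positivity) (by positivity)]
      calc (1 : ℝ) = (n + 1) * (1 - ((n + 1 : ℝ) / n)⁻¹) := by field_simp; ring
        _ ≤ (n + 1) * Real.log ((n + 1) / n) := by
          gcongr
          exact Real.one_sub_inv_le_log_of_pos (by positivity)
    rw [log_succ_factorial]
    push_cast
    linarith

theorem log_factorial_eq_sum_vonMangoldt_mul_div (n : ℕ) :
    Real.log n ! = ∑ d ∈ Ioc 0 n, Λ d * (n / d : ℕ) := by
  rw [← sum_Ioc_mul_zeta_eq_sum, vonMangoldt_mul_zeta, ← prod_Ico_id_eq_factorial, cast_prod,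
    Real.log_prod fun m hm ↦ by have := (mem_Icc.mp hm).1; positivity]
  rfl

theorem sum_vonMangoldt_mul_div_le_log_factorial (n : ℕ) (D : Finset ℕ) :
    ∑ d ∈ D, Λ d * (n / d : ℕ) ≤ Real.log n ! := by
  have term_nonneg (d : ℕ) : 0 ≤ Λ d * (n / d : ℕ) :=
    mul_nonneg vonMangoldt_nonneg (cast_nonneg _)
  rw [log_factorial_eq_sum_vonMangoldt_mul_div, ← sum_filter_ne_zero]
  refine sum_le_sum_of_subset_of_nonneg (fun d hd ↦ ?_) fun d _ _ ↦ term_nonneg d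
  have quotient_ne_zero : n / d ≠ 0 := fun h ↦ (mem_filter.mp hd).2 (by simp [h])
  obtain ⟨d_ne_zero, d_le_n⟩ := Nat.div_ne_zero_iff.mp quotient_ne_zero
  exact mem_Ioc.mpr ⟨Nat.pos_of_ne_zero d_ne_zero, d_le_n⟩

theorem succ_mul_sum_vonMangoldt_div_le (n : ℕ) (D : Finset ℕ) :
    (n + 1) * ∑ d ∈ D, Λ d / d ≤ Real.log n ! + ∑ d ∈ D, Λ d := by
  have succ_div_le (d : ℕ) : (n + 1 : ℝ) / d ≤ (n / d : ℕ) + 1 := by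
    rcases d.eq_zero_or_pos with rfl | hd
    · simp
    · rw [div_le_iff₀' (by exact_mod_cast hd)]
      exact_mod_cast Nat.lt_mul_div_succ n hd
  calc (n + 1) * ∑ d ∈ D, Λ d / d = ∑ d ∈ D, Λ d * ((n + 1) / d) := by
        rw [mul_sum]
        exact sum_congr rfl fun d _ ↦ by ring
    _ ≤ ∑ d ∈ D, Λ d * ((n / d : ℕ) + 1) :=
        sum_le_sum fun d _ ↦ mul_le_mul_of_nonneg_left (succ_div_le d) vonMangoldt_nonneg
    _ = ∑ d ∈ D, Λ d * (n / d : ℕ) + ∑ d ∈ D, Λ d := by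
        simp only [mul_add, mul_one, sum_add_distrib]
    _ ≤ Real.log n ! + ∑ d ∈ D, Λ d := by
        gcongr
        exact sum_vonMangoldt_mul_div_le_log_factorial n D

theorem vonMangoldt_prime_pow {p k : ℕ} (hp : p.Prime) (hk : k ≠ 0) :
    Λ (p ^ k) = Real.log p := by
  rw [vonMangoldt_apply_pow hk, vonMangoldt_apply_prime hp]

theorem disjoint_primesLE_four_eight_nine_sixteen (n : ℕ) :
    Disjoint (primesLE n) {4, 8, 9, 16} := by
  refine Finset.disjoint_right.mpr fun d hd hdn ↦ ?_
  have d_prime := prime_of_mem_primesLE hdn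
  fin_cases hd <;> norm_num at d_prime

theorem sum_vonMangoldt_mul_primesLE_union (n : ℕ) (c : ℕ → ℝ) :
    ∑ d ∈ primesLE n ∪ {4, 8, 9, 16}, Λ d * c d =
      ∑ p ∈ primesLE n, Real.log p * c p +
        ((c 4 + c 8 + c 16) * Real.log 2 + c 9 * Real.log 3) := by
  have four : Λ 4 = Real.log 2 := vonMangoldt_prime_pow prime_two (k := 2) two_ne_zero
  have eight : Λ 8 = Real.log 2 := vonMangoldt_prime_pow prime_two (k := 3) three_ne_zero
  have nine : Λ 9 = Real.log 3 := vonMangoldt_prime_pow prime_three (k := 2) two_ne_zero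
  have sixteen : Λ 16 = Real.log 2 := vonMangoldt_prime_pow prime_two (k := 4) four_ne_zero
  rw [sum_union (disjoint_primesLE_four_eight_nine_sixteen n)]
  congr 1
  · exact sum_congr rfl fun p hp ↦ by rw [vonMangoldt_apply_prime (prime_of_mem_primesLE hp)]
  · simp only [mem_insert, mem_singleton, reduceEqDiff, or_self, not_false_eq_true, sum_insert,
      sum_singleton, four, eight, nine, sixteen]
    ring

theorem succ_mul_sum_primesLE_log_div_add_le (n : ℕ) :
    (n + 1) * (∑ p ∈ primesLE n, Real.log p / p + (7 / 16 * Real.log 2 + 1 / 9 * Real.log 3)) ≤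
      Real.log n ! + (θ n + (3 * Real.log 2 + Real.log 3)) := by
  have weighted_sum := sum_vonMangoldt_mul_primesLE_union n fun d ↦ (d : ℝ)⁻¹
  have unweighted_sum := sum_vonMangoldt_mul_primesLE_union n fun _ ↦ 1
  have sum_le := succ_mul_sum_vonMangoldt_div_le n (primesLE n ∪ {4, 8, 9, 16})
  simp only [← div_eq_mul_inv] at weighted_sum
  simp only [mul_one, one_mul, ← theta_eq_sum_primesLE_log] at unweighted_sum
  rw [weighted_sum, unweighted_sum] at sum_le
  convert sum_le using 4 <;> norm_num

theorem sum_primesLE_log_div_lt_log_of_hundred_le {n : ℕ} (hn : 100 ≤ n) :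
    ∑ p ∈ primesLE n, Real.log p / p < Real.log n := by
  have hn_cast : (100 : ℝ) ≤ n := by exact_mod_cast hn
  have log_four : Real.log 4 = 2 * Real.log 2 := by
    rw [show (4 : ℝ) = 2 ^ 2 by norm_num, Real.log_pow, cast_two]
  have theta_le : θ n ≤ 2 * Real.log 2 * n := log_four ▸ theta_le_log4_mul_x n.cast_nonneg
  have gain_minus_loss :
      0.039 * (n + 1 : ℝ) ≤
        (n + 1) * (7 / 16 * Real.log 2 + 1 / 9 * Real.log 3 - (2 * Real.log 2 - 1)) := by
    rw [mul_comm]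
    gcongr
    linarith [Real.log_two_lt_d9, Real.log_three_gt_d9]
  refine lt_of_mul_lt_mul_left (a := (n + 1 : ℝ)) ?_ (by positivity)
  linarith [log_factorial_le (show 1 ≤ n by lia), succ_mul_sum_primesLE_log_div_add_le n,
    Real.log_two_lt_d9, Real.log_three_lt_d9]

theorem natLog_mul_log_le_log {b : ℕ} (hb : 1 < b) (n : ℕ) :
    Nat.log b n * Real.log b ≤ Real.log n := by
  rw [← le_div_iff₀ (Real.log_pos (by exact_mod_cast hb)), Real.log_div_log]
  exact Real.natLog_le_logb n b

theorem log_le_clog_mul_log {b : ℕ} (hb : 1 < b) (n : ℕ) :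
    Real.log n ≤ clog b n * Real.log b := by
  rw [← div_le_iff₀ (Real.log_pos (by exact_mod_cast hb)), Real.log_div_log,
    ← Real.natCeil_logb_natCast]
  exact Nat.le_ceil _

theorem sum_log_div_lt_log_of_sum_clog_pow_div_lt {b n k : ℕ} (hb : 1 < b) {s : Finset ℕ}
    (h : ∑ p ∈ s, (clog b (p ^ k) : ℚ) / p < Nat.log b (n ^ k)) :
    ∑ p ∈ s, Real.log p / p < Real.log n := by
  have log_b_pos : 0 < Real.log b := Real.log_pos (by exact_mod_cast hb)
  have h_real : ∑ p ∈ s, (clog b (p ^ k) : ℝ) / p < Nat.log b (n ^ k) := by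
    rify at h
    exact h
  have k_mul_log (m : ℕ) : k * Real.log m = Real.log (m ^ k : ℕ) := by
    rw [cast_pow, Real.log_pow]
  refine lt_of_mul_lt_mul_left (a := (k : ℝ)) ?_ k.cast_nonneg
  calc k * ∑ p ∈ s, Real.log p / p = ∑ p ∈ s, Real.log (p ^ k : ℕ) / p := by
        simp only [mul_sum, ← mul_div_assoc, k_mul_log]
    _ ≤ ∑ p ∈ s, clog b (p ^ k) * Real.log b / p :=
        sum_le_sum fun p _ ↦
          div_le_div_of_nonneg_right (log_le_clog_mul_log hb (p ^ k)) p.cast_nonneg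
    _ = (∑ p ∈ s, (clog b (p ^ k) : ℝ) / p) * Real.log b := by
        simp only [sum_mul, div_mul_eq_mul_div]
    _ < Nat.log b (n ^ k) * Real.log b := by gcongr
    _ ≤ k * Real.log n := (natLog_mul_log_le_log hb (n ^ k)).trans_eq (k_mul_log n).symm

theorem sum_primesLE_log_div_lt_log_of_lt_hundred {n : ℕ} (hn : 2 ≤ n) (hn' : n < 100) :
    ∑ p ∈ primesLE n, Real.log p / p < Real.log n := by
  -- Without squaring, the rounding is too coarse at `m = 3` and `m = 7`.
  have rounded_log_estimate : ∀ m ∈ Ico 2 100,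
      ∑ p ∈ primesLE m, (clog 2 (p ^ 2) : ℚ) / p < Nat.log 2 (m ^ 2) := by
    decide +kernel
  exact sum_log_div_lt_log_of_sum_clog_pow_div_lt one_lt_two
    (rounded_log_estimate n (mem_Ico.mpr ⟨hn, hn'⟩))

theorem sum_primesLE_log_div_lt_log {n : ℕ} (hn : 2 ≤ n) :
    ∑ p ∈ primesLE n, Real.log p / p < Real.log n :=
  (lt_or_ge n 100).elim (sum_primesLE_log_div_lt_log_of_lt_hundred hn)
    sum_primesLE_log_div_lt_log_of_hundred_le

/-- Explicit Mertens-type bound (Rosser–Schoenfeld): for every real `ν > 1`,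
`∑_{p ≤ ν, p prime} (log p) / p < log ν`. -/
theorem mertens_log_div_lt (ν : ℝ) (hν : 1 < ν) :
    ∑ p ∈ (Finset.range (⌊ν⌋₊ + 1)).filter Nat.Prime, Real.log p / p < Real.log ν := by
  rw [← primesLE_eq_filter_range]
  rcases lt_or_ge ν 2 with hν_lt | hν_ge
  · have floor_eq_one : ⌊ν⌋₊ = 1 := (floor_eq_iff (by linarith)).mpr (by norm_num [hν.le, hν_lt])
    simpa [floor_eq_one] using Real.log_pos hν
  · have two_le_floor : 2 ≤ ⌊ν⌋₊ := Nat.le_floor hν_ge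
    calc ∑ p ∈ primesLE ⌊ν⌋₊, Real.log p / p < Real.log ⌊ν⌋₊ :=
          sum_primesLE_log_div_lt_log two_le_floor
      _ ≤ Real.log ν := by
          gcongr
          exact Nat.floor_le (by linarith)
end

section
/- Let t ≥ 2 and s ≥ 1 be integers, and suppose positive integers a₁ ≥ a₂ ≥ ⋯ ≥ a_t ≥ 2 and n₁ ≥ n₂ ≥ ⋯ ≥ n_s ≥ 2 satisfy ∏_{l=1}^{t} a_l! = ∏_{j=1}^{s} n_j! and n₁ > a₁. Then no integer p with a₁ < p ≤ n₁ is prime; equivalently, none of the factors of Δ(m₁, k₁) = m₁(m₁+1)⋯(m₁+k₁−1), where m₁ = a₁ + 1 and k₁ = n₁ − a₁, is a prime number. -/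
section ProdFactorial

open scoped Nat

variable {ι κ : Type*} {s : Finset ι} {t : Finset κ} {a : ι → ℕ} {n : κ → ℕ} {p : ℕ}

theorem prime_dvd_prod_factorial_iff (hp : p.Prime) :
    p ∣ ∏ i ∈ s, (a i)! ↔ ∃ i ∈ s, p ≤ a i := by
  simp only [hp.prime.dvd_finsetProd_iff, hp.dvd_factorial]

theorem no_prime_in_interval_general {b : ℕ} {j : κ}
    (hdvd : ∏ k ∈ t, (n k)! ∣ ∏ i ∈ s, (a i)!) (hab : ∀ i ∈ s, a i ≤ b)
    (hj : j ∈ t) (hbp : b < p) (hpn : p ≤ n j) : ¬ p.Prime := by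
  intro hp
  have hp_dvd : p ∣ ∏ i ∈ s, (a i)! :=
    ((prime_dvd_prod_factorial_iff hp).2 ⟨j, hj, hpn⟩).trans hdvd
  obtain ⟨i, hi, hpi⟩ := (prime_dvd_prod_factorial_iff hp).1 hp_dvd
  exact (hpi.trans (hab i hi)).not_gt hbp

end ProdFactorial

/-- Lemma 2.2(i)/2.3(i): if `a₁ ≥ ⋯ ≥ a_t ≥ 2` and `n₁ ≥ ⋯ ≥ n_s ≥ 2` satisfy
`∏ a_l ! = ∏ n_j !` and `n₁ > a₁`, then no integer `p` with `a₁ < p ≤ n₁` is prime,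
i.e. none of the factors of `Δ(m₁, k₁) = (a₁+1)(a₁+2)⋯n₁` is prime. -/
theorem no_prime_in_interval
    (t s : ℕ) (ht : 2 ≤ t) (hs : 1 ≤ s)
    (a : Fin t → ℕ) (n : Fin s → ℕ)
    (ha : ∀ l l' : Fin t, l ≤ l' → a l' ≤ a l) (ha2 : ∀ l, 2 ≤ a l)
    (hn : ∀ j j' : Fin s, j ≤ j' → n j' ≤ n j) (hn2 : ∀ j, 2 ≤ n j)
    (heq : ∏ l : Fin t, Nat.factorial (a l) = ∏ j : Fin s, Nat.factorial (n j))
    (h1 : a ⟨0, by omega⟩ < n ⟨0, by omega⟩) :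
    ∀ p : ℕ, a ⟨0, by omega⟩ < p → p ≤ n ⟨0, by omega⟩ → ¬ p.Prime := by
  intro p hap hpn
  exact no_prime_in_interval_general heq.symm.dvd
    (fun l _ => ha ⟨0, by omega⟩ l (Fin.mk_le_of_le_val (Nat.zero_le _)))
    (Finset.mem_univ _) hap hpn
end

section
/- Let t ≥ 3, suppose positive integers a₁ ≥ a₂ ≥ ⋯ ≥ a_t ≥ 2 and n₁ ≥ n₂ ≥ 2 satisfy ∏_{l=1}^{t} a_l! = n₁!·n₂!, n₁ > a₁, and n₂ > a_i for some index 2 ≤ i ≤ t. Set m₁ = a₁ + 1, k₁ = n₁ − a₁, k₂ = n₂ − a_i, and a = max{a_l : l ≠ 1, l ≠ i}. Then a·log a − a ≤ log(a!) ≤ (k₁ + k₂)·log(2m₁). -/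
/-!
Write `M` for the largest of the `a l` and `z` for an index attaining it. By Bertrand's postulate
there is a prime `p` with `M + 1 < p ≤ 2 * (M + 1)`; it divides no `(a l)!`, so it divides neither
`n₁!` nor `n₂!`, and both `n₁` and `n₂` are smaller than `2 * (M + 1)`. Cancelling
`(a z)! * (a i)!` from `∏ l, (a l)! = n₁! * n₂!` leaves on the left the product of the other
factorials, one of which is `A !`, and on the right `k₁ + k₂` factors smaller than `2 * (M + 1)`.
-/

section

open Finset
open scoped Nat

theorem mul_log_sub_self_le_log_factorial (n : ℕ) : n * Real.log n - n ≤ Real.log n ! := by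
  rcases n.eq_zero_or_pos with rfl | hn
  · simp
  have hexp : Real.log ((n : ℝ) ^ n / n !) ≤ n :=
    (Real.log_le_iff_le_exp (by positivity)).2 (Real.pow_div_factorial_le_exp n n.cast_nonneg n)
  rw [Real.log_div (by positivity) (by positivity), Real.log_pow] at hexp
  linarith

theorem factorial_add_le_factorial_mul_pow {m k N : ℕ} (h : m + k ≤ N) :
    (m + k)! ≤ m ! * N ^ k := by
  rw [← Nat.factorial_mul_ascFactorial]
  gcongr
  exact (Nat.ascFactorial_le_pow_add m k).trans (Nat.pow_le_pow_left h k)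

theorem factorial_sup_dvd_prod_factorial {ι : Type*} (s : Finset ι) (a : ι → ℕ) :
    (s.sup a)! ∣ ∏ l ∈ s, (a l)! := by
  rcases s.eq_empty_or_nonempty with rfl | hs
  · simp
  obtain ⟨j, hj, hsup⟩ := s.exists_mem_eq_sup hs a
  rw [hsup]
  exact dvd_prod_of_mem (fun l => (a l)!) hj

variable {ι : Type*} {s : Finset ι} {a : ι → ℕ}

theorem lt_two_mul_of_factorial_dvd_prod_factorial {n M : ℕ} (ha : ∀ l ∈ s, a l ≤ M)
    (h : n ! ∣ ∏ l ∈ s, (a l)!) : n < 2 * (M + 1) := by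
  obtain ⟨p, hp, hMp, hpM⟩ := Nat.exists_prime_lt_and_le_two_mul (M + 1) M.succ_ne_zero
  suffices hnp : n < p from hnp.trans_le hpM
  by_contra! hpn
  obtain ⟨l, hl, hpl⟩ := (hp.prime.dvd_finsetProd_iff _).1 ((hp.dvd_factorial.2 hpn).trans h)
  have hle : p ≤ a l := hp.dvd_factorial.1 hpl
  have := ha l hl
  omega

variable [DecidableEq ι] {z i : ι}

theorem prod_factorial_erase_erase_le_pow {k₁ k₂ N : ℕ} (hz : z ∈ s) (hi : i ∈ s) (hiz : i ≠ z)
    (h : ∏ l ∈ s, (a l)! ≤ (a z + k₁)! * (a i + k₂)!) (h₁ : a z + k₁ ≤ N) (h₂ : a i + k₂ ≤ N) :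
    ∏ l ∈ (s.erase z).erase i, (a l)! ≤ N ^ (k₁ + k₂) := by
  refine Nat.le_of_mul_le_mul_left ?_ (Nat.mul_pos (a z).factorial_pos (a i).factorial_pos)
  calc (a z)! * (a i)! * ∏ l ∈ (s.erase z).erase i, (a l)!
      = ∏ l ∈ s, (a l)! := by
        rw [mul_assoc, mul_prod_erase _ (fun l => (a l)!) (mem_erase.2 ⟨hiz, hi⟩),
          mul_prod_erase _ (fun l => (a l)!) hz]
    _ ≤ (a z + k₁)! * (a i + k₂)! := h
    _ ≤ ((a z)! * N ^ k₁) * ((a i)! * N ^ k₂) :=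
        Nat.mul_le_mul (factorial_add_le_factorial_mul_pow h₁)
          (factorial_add_le_factorial_mul_pow h₂)
    _ = (a z)! * (a i)! * N ^ (k₁ + k₂) := by ring

theorem factorial_sup_erase_erase_le_pow {k₁ k₂ : ℕ} (hz : z ∈ s) (hi : i ∈ s) (hiz : i ≠ z)
    (hmax : ∀ l ∈ s, a l ≤ a z) (heq : ∏ l ∈ s, (a l)! = (a z + k₁)! * (a i + k₂)!) :
    (((s.erase z).erase i).sup a)! ≤ (2 * (a z + 1)) ^ (k₁ + k₂) := by
  have h₁ : a z + k₁ < 2 * (a z + 1) :=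
    lt_two_mul_of_factorial_dvd_prod_factorial hmax (heq ▸ dvd_mul_right _ _)
  have h₂ : a i + k₂ < 2 * (a z + 1) :=
    lt_two_mul_of_factorial_dvd_prod_factorial hmax (heq ▸ dvd_mul_left _ _)
  calc (((s.erase z).erase i).sup a)!
      ≤ ∏ l ∈ (s.erase z).erase i, (a l)! :=
        Nat.le_of_dvd (Nat.prod_factorial_pos _ _) (factorial_sup_dvd_prod_factorial _ _)
    _ ≤ (2 * (a z + 1)) ^ (k₁ + k₂) :=
        prod_factorial_erase_erase_le_pow hz hi hiz heq.le h₁.le h₂.le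

theorem log_factorial_bounds_s_two_general {n₁ n₂ A : ℕ} (hz : z ∈ s) (hi : i ∈ s) (hiz : i ≠ z)
    (hmax : ∀ l ∈ s, a l ≤ a z) (heq : ∏ l ∈ s, (a l)! = n₁ ! * n₂ !)
    (h₁ : a z ≤ n₁) (h₂ : a i ≤ n₂) (hA : A = ((s.erase z).erase i).sup a) :
    (A : ℝ) * Real.log A - A ≤ Real.log A ! ∧
      Real.log A ! ≤ (((n₁ - a z) + (n₂ - a i) : ℕ) : ℝ) * Real.log (2 * (a z + 1)) := by
  refine ⟨mul_log_sub_self_le_log_factorial A, ?_⟩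
  obtain ⟨k₁, rfl⟩ := Nat.exists_eq_add_of_le h₁
  obtain ⟨k₂, rfl⟩ := Nat.exists_eq_add_of_le h₂
  rw [Nat.add_sub_cancel_left, Nat.add_sub_cancel_left, ← Real.log_pow, hA]
  refine Real.log_le_log (by positivity) ?_
  exact_mod_cast factorial_sup_erase_erase_le_pow hz hi hiz hmax heq

end

/-- Lemma 2.2(ii): if `a₁ ≥ ⋯ ≥ a_t ≥ 2` (`t ≥ 3`) and `n₁ ≥ n₂ ≥ 2` satisfy
`∏ a_l ! = n₁! n₂!`, `n₁ > a₁` and `n₂ > a_i` for some index `i` with `2 ≤ i ≤ t`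
(0-indexed: `1 ≤ i`), then with `m₁ = a₁ + 1`, `k₁ = n₁ - a₁`, `k₂ = n₂ - a_i` and
`A = max {a_l : l ≠ 1, l ≠ i}` one has `A log A - A ≤ log (A!) ≤ (k₁ + k₂) log (2 m₁)`. -/
theorem log_factorial_bounds_s_two
    (t : ℕ) (ht : 3 ≤ t)
    (a : Fin t → ℕ) (n₁ n₂ : ℕ)
    (ha : ∀ l l' : Fin t, l ≤ l' → a l' ≤ a l) (ha2 : ∀ l, 2 ≤ a l)
    (hn : n₂ ≤ n₁) (hn2 : 2 ≤ n₂)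
    (heq : ∏ l : Fin t, Nat.factorial (a l) = Nat.factorial n₁ * Nat.factorial n₂)
    (i : Fin t) (hi : 1 ≤ i.val)
    (h1 : a ⟨0, by omega⟩ < n₁) (h2 : a i < n₂)
    (A : ℕ) (hA : A = ((Finset.univ.erase ⟨0, by omega⟩).erase i).sup a) :
    (A : ℝ) * Real.log A - A ≤ Real.log (Nat.factorial A) ∧
    Real.log (Nat.factorial A) ≤
      (((n₁ - a ⟨0, by omega⟩) + (n₂ - a i) : ℕ) : ℝ) *
        Real.log (2 * (a ⟨0, by omega⟩ + 1)) := by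
  exact log_factorial_bounds_s_two_general (Finset.mem_univ _) (Finset.mem_univ i)
    (Fin.ne_of_val_ne (Nat.ne_of_gt hi)) (fun l _ => ha _ l (Nat.zero_le _)) heq h1.le h2.le hA
end
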